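/- arXiv:1409.3159 — 2 statements merged into one kernel-verified Lean document; each statement's English description precedes it below -/
import Mathlib

section
/- Let G be a connected graph with σ_2 ≥ t_3 − 1. Then t_2 ≥ t_3, i.e., the order of a longest path in G is at least the order of a largest 3-ended tree in G. (Corollary 12) -/
open SimpleGraph

variable {V : Type*}

/-- A set of vertices is independent in `G`. -/
def IsIndSet (G : SimpleGraph V) (s : Set V) : Prop :=
  ∀ ⦃u⦄, u ∈ s → ∀ ⦃v⦄, v ∈ s → ¬ G.Adj u v

/-- The number of end-vertices (vertices of degree one) of a subgraph `H`. -/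
noncomputable def endVertexCount {G : SimpleGraph V} (H : G.Subgraph) : ℕ :=
  {v : V | v ∈ H.verts ∧ (H.neighborSet v).ncard = 1}.ncard

/-- `H` is a cycle; a single vertex and a single edge are regarded as
simple cycles of orders 1 and 2, respectively. -/
def IsCycleSubgraph {G : SimpleGraph V} (H : G.Subgraph) : Prop :=
  H.Connected ∧ (H.verts.ncard ≤ 2 ∨ ∀ v ∈ H.verts, (H.neighborSet v).ncard = 2)

/-- `H` is a `k`-ended tree in `G`: a tree with at most `k` end-vertices (leaves);
a cycle is regarded as a 1-ended tree. -/
def IsKEndedTree (G : SimpleGraph V) (k : ℕ) (H : G.Subgraph) : Prop :=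
  (H.coe.IsTree ∧ endVertexCount H ≤ k) ∨ (1 ≤ k ∧ IsCycleSubgraph H)

/-- `t k`: the order of a largest `k`-ended tree in `G`. -/
noncomputable def maxKEndedOrder (G : SimpleGraph V) (k : ℕ) : ℕ :=
  sSup {n | ∃ H : G.Subgraph, IsKEndedTree G k H ∧ H.verts.ncard = n}

/-- `σ m`: the minimum degree sum over independent sets of `m` vertices of `G`,
and `+∞` if the independence number of `G` is less than `m`. -/
noncomputable def minDegreeSum (G : SimpleGraph V) [Fintype V] [DecidableRel G.Adj]
    (m : ℕ) : ℕ∞ :=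
  ⨅ s ∈ {s : Finset V | s.card = m ∧ IsIndSet G ↑s}, (∑ v ∈ s, G.degree v : ℕ∞)

/-!
Let `p` be a longest path, with ends `u` and `v`; all neighbours of `u` and `v` lie on `p`. If the
ends of a longest path are adjacent, then, as the resulting cycle can be cut open at any of its
vertices, no edge leaves the path, which in a connected graph is therefore spanning. If `u` and `v`
are not adjacent and `deg u + deg v` exceeds the number of edges of `p`, then by pigeonhole `p` has
an edge `xy`, with `x` coming before `y`, such that `u` is adjacent to `y` and `v` to `x`; reversing
`p` from `y` to `v` gives a longest path whose ends `u` and `y` are adjacent. Hence `p` is spanning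
or has at least `σ₂ + 1` vertices. The order `t₃` is at most both of these bounds.
-/

section WalkReordering

variable {G : SimpleGraph V} {u v x : V}

lemma exists_walk_to_perm_support_of_adj (p : G.Walk u v) (h : G.Adj u v) (hx : x ∈ p.support) :
    ∃ (y : V) (q : G.Walk y x), q.support.Perm p.support := by
  classical
  let c : G.Walk v v := .cons h.symm p
  have hxc : x ∈ c.support := by simp [c, hx]
  have hnil : ¬ (c.rotate x hxc).Nil := by simp [c]
  refine ⟨_, (c.rotate x hxc).tail, ?_⟩
  rw [Walk.support_tail_of_not_nil _ hnil]
  exact (c.support_rotate x hxc).perm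

lemma exists_walk_from_perm_support_of_adj_fst {p : G.Walk u v} {d : G.Dart} (hd : d ∈ p.darts)
    (hv : G.Adj v d.fst) : ∃ q : G.Walk u d.snd, q.support.Perm p.support := by
  obtain ⟨r, s, rfl⟩ := (Walk.isSubwalk_toWalk_adj_iff_mem_darts p).2 hd
  refine ⟨r.append (.cons hv.symm s.reverse), ?_⟩
  simp [Walk.support_append, List.perm_append_left_iff]

lemma exists_crossing_dart [Fintype (G.neighborSet u)] [Fintype (G.neighborSet v)] {p : G.Walk u v}
    (hu : ∀ w, G.Adj u w → w ∈ p.support) (hv : ∀ w, G.Adj v w → w ∈ p.support)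
    (hdeg : p.length < G.degree u + G.degree v) :
    ∃ d ∈ p.darts, G.Adj u d.snd ∧ G.Adj v d.fst := by
  classical
  let D : Finset G.Dart := p.darts.toFinset
  have hD : D.card ≤ p.length := p.length_darts ▸ p.darts.toFinset_card_le
  have hdeg_u : G.degree u ≤ {d ∈ D | G.Adj u d.snd}.card := by
    refine Finset.card_le_card_of_surjOn (fun d => d.snd) fun w hw => ?_
    have huw : G.Adj u w := by simpa using hw
    have hw' : w ∈ p.darts.map (·.snd) := by
      have := hu w huw
      rw [← p.cons_map_snd_darts, List.mem_cons] at this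
      exact this.resolve_left huw.ne'
    obtain ⟨d, hd, rfl⟩ := List.mem_map.1 hw'
    exact ⟨d, by simp [D, hd, huw], rfl⟩
  have hdeg_v : G.degree v ≤ {d ∈ D | G.Adj v d.fst}.card := by
    refine Finset.card_le_card_of_surjOn (fun d => d.fst) fun w hw => ?_
    have hvw : G.Adj v w := by simpa using hw
    have hw' : w ∈ p.darts.map (·.fst) := by
      have := hv w hvw
      rw [← p.map_fst_darts_append, List.mem_append, List.mem_singleton] at this
      exact this.resolve_right hvw.ne'
    obtain ⟨d, hd, rfl⟩ := List.mem_map.1 hw'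
    exact ⟨d, by simp [D, hd, hvw], rfl⟩
  obtain ⟨d, hd⟩ := Finset.inter_nonempty_of_card_lt_card_add_card
    (D.filter_subset fun d => G.Adj u d.snd) (D.filter_subset fun d => G.Adj v d.fst) (by omega)
  simp only [Finset.mem_inter, Finset.mem_filter, D, List.mem_toFinset] at hd
  exact ⟨d, hd.1.1, hd.1.2, hd.2.2⟩

end WalkReordering

/-- A longest path of a graph: a path with at least as many edges as any other path, whatever the
ends of the latter. -/
def IsLongestPath {G : SimpleGraph V} {u v : V} (p : G.Walk u v) : Prop :=
  p.IsPath ∧ ∀ ⦃a b : V⦄ (q : G.Walk a b), q.IsPath → q.length ≤ p.length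

lemma exists_isLongestPath (G : SimpleGraph V) [Nonempty V] [Finite G.edgeSet] :
    ∃ (u v : V) (p : G.Walk u v), IsLongestPath p := by
  obtain ⟨u, v, p, hp, hmax⟩ := Walk.exists_isPath_forall_isPath_length_le_length G
  exact ⟨u, v, p, hp, hmax⟩

namespace IsLongestPath

variable {G : SimpleGraph V} {u v : V} {p : G.Walk u v}

lemma of_perm_support (hp : IsLongestPath p) {a b : V} {q : G.Walk a b}
    (hq : q.support.Perm p.support) : IsLongestPath q := by
  have hlen : q.length = p.length := by simpa using hq.length_eq
  exact ⟨.mk' (hq.nodup_iff.2 hp.1.support_nodup), fun _ _ r hr => hlen ▸ hp.2 r hr⟩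

lemma mem_support_of_adj_end (hp : IsLongestPath p) {w : V} (hw : G.Adj v w) : w ∈ p.support := by
  by_contra hwp
  have := hp.2 (p.concat hw) (hp.1.concat hwp hw)
  simp at this

lemma mem_support_of_adj_start (hp : IsLongestPath p) {w : V} (hw : G.Adj u w) :
    w ∈ p.support := by
  have hrev : IsLongestPath p.reverse := hp.of_perm_support (by simp)
  simpa using hrev.mem_support_of_adj_end hw

lemma mem_support_of_adj_ends (hp : IsLongestPath p) (hG : G.Preconnected) (h : G.Adj u v)
    (z : V) : z ∈ p.support := by
  by_contra hz
  obtain ⟨r⟩ := hG u z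
  obtain ⟨d, -, hfst, hsnd⟩ := r.exists_boundary_dart {x | x ∈ p.support} p.start_mem_support hz
  obtain ⟨y, q, hq⟩ := exists_walk_to_perm_support_of_adj p h hfst
  exact hsnd (hq.mem_iff.1 ((hp.of_perm_support hq).mem_support_of_adj_end d.adj))

lemma ends_ne_of_notMem_support (hp : IsLongestPath p) (hG : G.Preconnected) {z : V}
    (hz : z ∉ p.support) : u ≠ v := by
  rintro rfl
  obtain rfl := Walk.eq_nil_iff_nil.2 (Walk.isPath_iff_nil.1 hp.1)
  have : Nontrivial V := ⟨u, z, by simpa [eq_comm] using hz⟩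
  obtain ⟨w, hw⟩ := hG.exists_adj_of_nontrivial u
  exact hw.ne (by simpa [eq_comm] using hp.mem_support_of_adj_end hw)

lemma degree_add_degree_le_length (hp : IsLongestPath p) (hG : G.Preconnected)
    [Fintype (G.neighborSet u)] [Fintype (G.neighborSet v)] {z : V} (hz : z ∉ p.support) :
    G.degree u + G.degree v ≤ p.length := by
  by_contra! hdeg
  obtain ⟨d, hd, hu, hv⟩ := exists_crossing_dart (fun _ => hp.mem_support_of_adj_start)
    (fun _ => hp.mem_support_of_adj_end) hdeg
  obtain ⟨q, hq⟩ := exists_walk_from_perm_support_of_adj_fst hd hv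
  exact hz (hq.mem_iff.1 ((hp.of_perm_support hq).mem_support_of_adj_ends hG hu z))

end IsLongestPath

section PathOrder

variable {G : SimpleGraph V} {u v : V} {p : G.Walk u v}

lemma ncard_verts_toSubgraph_of_isPath (hp : p.IsPath) :
    p.toSubgraph.verts.ncard = p.length + 1 := by
  classical
  have hverts : p.toSubgraph.verts = (p.support.toFinset : Set V) := by simp [Walk.verts_toSubgraph]
  rw [hverts, Set.ncard_coe_finset, List.toFinset_card_of_nodup hp.support_nodup,
    Walk.length_support]

lemma isTree_coe_toSubgraph_of_isPath (hp : p.IsPath) : p.toSubgraph.coe.IsTree := by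
  classical
  have hfin : Finite p.toSubgraph.verts := by
    rw [Walk.verts_toSubgraph]
    exact p.support.finite_toSet
  have hedges : p.toSubgraph.edgeSet = (p.edges.toFinset : Set (Sym2 V)) := by ext e; simp
  refine isTree_iff_connected_and_card.2 ⟨p.toSubgraph_connected.coe, ?_⟩
  rw [Nat.card_coe_set_eq, Nat.card_coe_set_eq, ncard_verts_toSubgraph_of_isPath hp,
    ← Set.ncard_image_of_injective _ (Sym2.map.injective Subtype.val_injective),
    Subgraph.image_coe_edgeSet_coe, hedges, Set.ncard_coe_finset,
    List.toFinset_card_of_nodup hp.isTrail.edges_nodup, Walk.length_edges]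

lemma endVertexCount_toSubgraph_le_two_of_isPath (hp : p.IsPath) :
    endVertexCount p.toSubgraph ≤ 2 := by
  suffices hends : {w | w ∈ p.toSubgraph.verts ∧ (p.toSubgraph.neighborSet w).ncard = 1} ⊆ {u, v}
    from (Set.ncard_le_ncard hends).trans <|
      (Set.ncard_insert_le u {v}).trans_eq (by rw [Set.ncard_singleton])
  rintro w ⟨hw, hw_end⟩
  obtain ⟨i, rfl, hi⟩ := Walk.mem_support_iff_exists_getVert.1 (p.mem_verts_toSubgraph.1 hw)
  by_contra hne
  have hi_start : i ≠ 0 := by rintro rfl; simp at hne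
  have hi_end : i ≠ p.length := by rintro rfl; simp at hne
  have := hp.ncard_neighborSet_toSubgraph_internal_eq_two hi_start (by omega)
  omega

lemma isKEndedTree_two_toSubgraph_of_isPath (hp : p.IsPath) : IsKEndedTree G 2 p.toSubgraph :=
  .inl ⟨isTree_coe_toSubgraph_of_isPath hp, endVertexCount_toSubgraph_le_two_of_isPath hp⟩

end PathOrder

lemma maxKEndedOrder_le_card [Fintype V] (G : SimpleGraph V) (k : ℕ) :
    maxKEndedOrder G k ≤ Fintype.card V :=
  csSup_le' <| by
    rintro _ ⟨H, -, rfl⟩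
    exact (Set.ncard_le_card _).trans_eq Nat.card_eq_fintype_card

lemma IsKEndedTree.ncard_verts_le_maxKEndedOrder [Finite V] {G : SimpleGraph V} {k : ℕ}
    {H : G.Subgraph} (hH : IsKEndedTree G k H) : H.verts.ncard ≤ maxKEndedOrder G k :=
  le_csSup ⟨Nat.card V, by rintro _ ⟨H, -, rfl⟩; exact Set.ncard_le_card _⟩ ⟨H, hH, rfl⟩

lemma length_add_one_le_maxKEndedOrder_two [Finite V] {G : SimpleGraph V} {u v : V}
    {p : G.Walk u v} (hp : p.IsPath) : p.length + 1 ≤ maxKEndedOrder G 2 :=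
  ncard_verts_toSubgraph_of_isPath hp ▸
    (isKEndedTree_two_toSubgraph_of_isPath hp).ncard_verts_le_maxKEndedOrder

lemma minDegreeSum_two_le [Fintype V] {G : SimpleGraph V} [DecidableRel G.Adj] {u v : V}
    (huv : u ≠ v) (hadj : ¬ G.Adj u v) : minDegreeSum G 2 ≤ G.degree u + G.degree v := by
  classical
  have hind : IsIndSet G ↑({u, v} : Finset V) := by
    intro x hx y hy
    simp only [Finset.coe_pair, Set.mem_insert_iff, Set.mem_singleton_iff] at hx hy
    rcases hx with rfl | rfl <;> rcases hy with rfl | rfl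
    exacts [G.irrefl, hadj, fun h => hadj h.symm, G.irrefl]
  exact (iInf₂_le _ ⟨Finset.card_pair huv, hind⟩).trans_eq (Finset.sum_pair huv)

theorem corollary12_general [Fintype V] (G : SimpleGraph V) [DecidableRel G.Adj]
    (hG : G.Connected) :
    min (Fintype.card V : ℕ∞) (minDegreeSum G 2 + 1) ≤ maxKEndedOrder G 2 := by
  classical
  have := hG.nonempty
  obtain ⟨u, v, p, hp⟩ := exists_isLongestPath G
  have hpath : ((p.length + 1 : ℕ) : ℕ∞) ≤ maxKEndedOrder G 2 :=
    Nat.cast_le.2 (length_add_one_le_maxKEndedOrder_two hp.1)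
  refine le_trans ?_ hpath
  by_cases hspan : ∀ z, z ∈ p.support
  · refine min_le_of_left_le (Nat.cast_le.2 ?_)
    rw [← (hp.1.isHamiltonian_of_mem hspan).length_support, Walk.length_support]
  · obtain ⟨z, hz⟩ := not_forall.1 hspan
    have hne : u ≠ v := hp.ends_ne_of_notMem_support hG.preconnected hz
    have hadj : ¬ G.Adj u v := fun h => hz (hp.mem_support_of_adj_ends hG.preconnected h z)
    have hdeg := hp.degree_add_degree_le_length hG.preconnected hz
    refine min_le_of_right_le ?_
    calc minDegreeSum G 2 + 1 ≤ G.degree u + G.degree v + 1 := by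
          gcongr; exact minDegreeSum_two_le hne hadj
      _ ≤ (p.length + 1 : ℕ) := by exact_mod_cast Nat.succ_le_succ hdeg

/-- **Corollary 12.** If `G` is connected and `σ_2 ≥ t_3 - 1`, then `t_2 ≥ t_3`. -/
theorem corollary12 [Fintype V] (G : SimpleGraph V) [DecidableRel G.Adj]
    (hG : G.Connected)
    (h : (maxKEndedOrder G 3 : ℕ∞) ≤ minDegreeSum G 2 + 1) :
    maxKEndedOrder G 2 ≥ maxKEndedOrder G 3 :=
  Nat.cast_le.1 <|
    (le_min (Nat.cast_le.2 (maxKEndedOrder_le_card G 3)) h).trans (corollary12_general G hG)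
end

section
/- Let G be a connected graph with σ_3 ≥ t_{k+1} − λ(k − 2) for some integers k ≥ 2 and λ ≥ 2. Then t_k ≥ t_{k+1} − λ + 1. (Corollary 16) -/
open SimpleGraph

variable {V : Type*}

/-!
Suppose that `t_k + λ ≤ t_{k+1}`. Then a largest `(k + 1)`-ended tree `T` has exactly `k + 1`
leaves. If a modification of `T` merges away a leaf, it costs at least `λ` vertices; and if adding
an edge of `G` to `T` closes a cycle, an edge of that cycle at a branch vertex can be deleted
instead. It follows that the leaves are pairwise nonadjacent, that each leaf ends a path of `λ`
vertices hanging from the rest of `T` and having no neighbours among the other leaves, and that a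
vertex joined to a leaf in another part of `T` has a parent and a grandparent with a single child,
which are joined to no further leaf.

Choose three leaves and root `T` at a vertex minimising the total distance to them, so that they lie
in different branches. Charge an edge from a chosen leaf `j` to `y` to the vertex `y`, or to its
child towards `j` if `y` lies on the path from the root to `j`. A vertex with two charges can pass
one on to its parent, and a vertex with three charges can also pass one on to its grandparent, as
these have none. Since nothing is charged to the root or to the `λ (k - 2)` vertices of the hanging
paths of the other leaves, the three degrees sum to at most `t_{k+1} - λ (k - 2) - 1`.
-/

-- The points `p^[i] x` with `x ∈ W` and `i < f x` are distinct: tracing a coincidence back leads to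
-- the start of one segment, where `f` is positive, while `f` vanishes past the start of the other.
theorem sum_le_card_of_iterate {α : Type*} {W X : Finset α} {f : α → ℕ} {p : α → α}
    (hmem : ∀ x ∈ W, ∀ i < f x, p^[i] x ∈ X)
    (hzero : ∀ x ∈ W, ∀ i, i + 1 < f x → f (p^[i + 1] x) = 0)
    (hinj : ∀ x ∈ W, ∀ y ∈ W, ∀ i j, i + 1 < f x → j + 1 < f y →
      p^[i + 1] x = p^[j + 1] y → p^[i] x = p^[j] y) :
    ∑ x ∈ W, f x ≤ X.card := by
  have hiter : ∀ x ∈ W, ∀ y ∈ W, ∀ i j, i < f x → j < f y → p^[i] x = p^[j] y →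
      x = y ∧ i = j := by
    intro x hx y hy i
    induction i with
    | zero =>
      rintro (_ | j) hi hj (h : x = _)
      · exact ⟨h, rfl⟩
      · exact (hi.ne' ((congrArg f h).trans (hzero y hy j hj))).elim
    | succ i ih =>
      rintro (_ | j) hi hj h
      · exact (hj.ne' ((congrArg f h).symm.trans (hzero x hx i hi))).elim
      · exact (ih j (by lia) (by lia) (hinj x hx y hy i j hi hj h)).imp_right (congrArg (· + 1))
  calc ∑ x ∈ W, f x = (W.sigma fun x ↦ Finset.range (f x)).card := by
        simp only [Finset.card_sigma, Finset.card_range]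
    _ ≤ X.card := by
        refine Finset.card_le_card_of_injOn (fun q ↦ p^[q.2] q.1) ?_ ?_
        · rintro ⟨x, i⟩ hq
          obtain ⟨hx, hi⟩ := Finset.mem_sigma.1 hq
          exact hmem x hx i (Finset.mem_range.1 hi)
        · rintro ⟨x, i⟩ hq ⟨y, j⟩ hr h
          obtain ⟨hx, hi⟩ := Finset.mem_sigma.1 hq
          obtain ⟨hy, hj⟩ := Finset.mem_sigma.1 hr
          obtain ⟨rfl, rfl⟩ :=
            hiter x hx y hy i j (Finset.mem_range.1 hi) (Finset.mem_range.1 hj) h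
          rfl

theorem exists_adj_dist_eq_add_one {F : SimpleGraph V} {x y : V} (h : F.Reachable x y)
    (hne : x ≠ y) : ∃ z, F.Adj x z ∧ F.dist y x = F.dist y z + 1 := by
  obtain ⟨w, hw⟩ := h.exists_walk_length_eq_dist
  cases w with
  | nil => exact (hne rfl).elim
  | @cons _ z _ hadj q =>
    refine ⟨z, hadj, ?_⟩
    have htriangle := hadj.symm.reachable.dist_triangle_right y
    have hq := F.dist_le q
    rw [Walk.length_cons, dist_comm] at hw
    rw [dist_comm] at hq
    rw [dist_eq_one_iff_adj.2 hadj.symm] at htriangle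
    lia

theorem ncard_neighborSet_coe {G : SimpleGraph V} (H : G.Subgraph) (v : H.verts) :
    (H.coe.neighborSet v).ncard = (H.neighborSet v).ncard :=
  Nat.card_congr (Subgraph.coeNeighborSetEquiv v)

theorem card_edgeSet_coe {G : SimpleGraph V} (H : G.Subgraph) :
    Nat.card H.coe.edgeSet = H.edgeSet.ncard := by
  rw [← H.image_coe_edgeSet_coe, Nat.card_coe_set_eq,
    Set.ncard_image_of_injective _ (Sym2.map.injective Subtype.val_injective)]

section Unicyclic

variable [Finite V] {G : SimpleGraph V}

theorem ncard_neighborSet_eq_two_of_isCycle (hG : G.Connected) {a : V} {w : G.Walk a a}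
    (hw : w.IsCycle) (hdeg : ∀ x ∈ w.support, (G.neighborSet x).ncard ≤ 2) (v : V) :
    (G.neighborSet v).ncard = 2 := by
  have hnbr : ∀ x ∈ w.support, w.toSubgraph.neighborSet x = G.neighborSet x := fun x hx ↦
    Set.eq_of_subset_of_ncard_le (w.toSubgraph.neighborSet_subset x)
      ((hdeg x hx).trans_eq (hw.ncard_neighborSet_toSubgraph_eq_two hx).symm)
  have hv : v ∈ w.toSubgraph.verts := by
    refine (hG a v).mem_subgraphVerts (fun x hx y hxy ↦ ?_) w.start_mem_verts_toSubgraph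
    have hy : y ∈ w.toSubgraph.neighborSet x := by
      rwa [hnbr x (w.mem_verts_toSubgraph.1 hx)]
    exact hy
  rw [w.mem_verts_toSubgraph] at hv
  rw [← hnbr v hv, hw.ncard_neighborSet_toSubgraph_eq_two hv]

theorem isTree_deleteEdges_of_mem_cycle (hG : G.Connected)
    (hcard : Nat.card G.edgeSet ≤ Nat.card V) {a : V} {w : G.Walk a a} (hw : w.IsCycle)
    {u v : V} (huv : s(u, v) ∈ w.edges) : (G.deleteEdges {s(u, v)}).IsTree := by
  have he : s(u, v) ∈ G.edgeSet := w.edges_subset_edgeSet huv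
  have hconn : (G.deleteEdges {s(u, v)}).Connected := hG.connected_delete_edge_of_not_isBridge
    fun hb ↦ (isBridge_iff_forall_cycle_notMem he).1 hb w hw huv
  have hedges : Nat.card (G.deleteEdges {s(u, v)}).edgeSet + 1 = Nat.card G.edgeSet := by
    rw [edgeSet_deleteEdges, Nat.card_coe_set_eq, Nat.card_coe_set_eq]
    exact Set.ncard_sdiff_singleton_add_one he
  have := hconn.card_vert_le_card_edgeSet_add_one
  exact isTree_iff_connected_and_card.2 ⟨hconn, by lia⟩

theorem isTree_or_ncard_neighborSet_eq_two_or_isTree_deleteEdges (hG : G.Connected)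
    (hcard : Nat.card G.edgeSet ≤ Nat.card V) :
    G.IsTree ∨ (∀ v, (G.neighborSet v).ncard = 2) ∨
      ∃ u v, G.Adj u v ∧ 3 ≤ (G.neighborSet u).ncard ∧ (G.deleteEdges {s(u, v)}).IsTree := by
  by_cases hac : G.IsAcyclic
  · exact Or.inl ⟨hG, hac⟩
  right
  obtain ⟨a, w, hw⟩ : ∃ a, ∃ w : G.Walk a a, w.IsCycle := by
    simpa only [IsAcyclic, not_forall, not_not] using hac
  by_cases! hdeg : ∀ x ∈ w.support, (G.neighborSet x).ncard ≤ 2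
  · exact Or.inl (ncard_neighborSet_eq_two_of_isCycle hG hw hdeg)
  right
  obtain ⟨u, hu, hdegu⟩ := hdeg
  obtain ⟨v, hv⟩ : (w.toSubgraph.neighborSet u).Nonempty := by
    apply Set.nonempty_of_ncard_ne_zero
    simp [hw.ncard_neighborSet_toSubgraph_eq_two hu]
  have huv : w.toSubgraph.Adj u v := hv
  exact ⟨u, v, huv.adj_sub, hdegu,
    isTree_deleteEdges_of_mem_cycle hG hcard hw (w.mem_edges_toSubgraph.1 huv)⟩

theorem bddAbove_ncard_isKEndedTree (G : SimpleGraph V) (k : ℕ) :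
    BddAbove {n | ∃ H : G.Subgraph, IsKEndedTree G k H ∧ H.verts.ncard = n} :=
  ⟨Nat.card V, fun _ ⟨_, _, hn⟩ ↦ hn ▸ Set.ncard_le_card _⟩

theorem IsKEndedTree.ncard_verts_le {k : ℕ} {H : G.Subgraph} (hH : IsKEndedTree G k H) :
    H.verts.ncard ≤ maxKEndedOrder G k :=
  le_csSup (bddAbove_ncard_isKEndedTree G k) ⟨H, hH, rfl⟩

theorem exists_isKEndedTree_ncard_verts_eq {k : ℕ} (hpos : 0 < maxKEndedOrder G k) :
    ∃ H : G.Subgraph, IsKEndedTree G k H ∧ H.verts.ncard = maxKEndedOrder G k := by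
  refine Nat.sSup_mem (Set.nonempty_iff_ne_empty.2 fun hempty ↦ hpos.ne' ?_)
    (bddAbove_ncard_isKEndedTree G k)
  rw [maxKEndedOrder, hempty, csSup_empty, bot_eq_zero]

theorem isTree_coe_of_ncard_edgeSet_add_one_le {H : G.Subgraph} (hH : H.Connected)
    (hcard : H.edgeSet.ncard + 1 ≤ H.verts.ncard) : H.coe.IsTree := by
  have := hH.coe.card_vert_le_card_edgeSet_add_one
  rw [card_edgeSet_coe, Nat.card_coe_set_eq] at this
  refine isTree_iff_connected_and_card.2 ⟨hH.coe, ?_⟩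
  rw [card_edgeSet_coe, Nat.card_coe_set_eq]
  lia

theorem eq_of_le_of_isTree_coe {H K : G.Subgraph} (hle : K ≤ H) (hverts : K.verts = H.verts)
    (hK : K.Connected) (hH : H.coe.IsTree) : K = H := by
  have hcard := (isTree_iff_connected_and_card.1 hH).2
  have hle_card := hK.coe.card_vert_le_card_edgeSet_add_one
  rw [card_edgeSet_coe, Nat.card_coe_set_eq] at hcard hle_card
  have hedges : K.edgeSet = H.edgeSet :=
    Set.eq_of_subset_of_ncard_le (Subgraph.edgeSet_mono hle) (by rw [hverts] at hle_card; lia)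
  refine le_antisymm hle ⟨hverts.ge, fun x y hxy ↦ ?_⟩
  rwa [← Subgraph.mem_edgeSet, hedges, Subgraph.mem_edgeSet]

theorem endVertexCount_deleteEdges_le {H : G.Subgraph} {u v : V}
    (hu : 3 ≤ (H.neighborSet u).ncard) :
    endVertexCount (H.deleteEdges {s(u, v)}) ≤ endVertexCount H + 1 := by
  refine le_trans (Set.ncard_le_ncard ?_) (Set.ncard_insert_le v _)
  rintro x ⟨hx, hx1⟩
  refine or_iff_not_imp_left.2 fun hxv ↦ ⟨hx, ?_⟩
  by_cases hxu : x = u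
  · subst hxu
    have hsub : H.neighborSet x \ {v} ⊆ (H.deleteEdges {s(x, v)}).neighborSet x := by
      intro y ⟨hxy, hyv⟩
      have hne : s(x, y) ≠ s(x, v) := fun h ↦ hyv (Sym2.congr_right.1 h)
      exact (Subgraph.deleteEdges_adj _ _ _).2 ⟨hxy, hne⟩
    have hle := Set.ncard_le_ncard hsub
    have := Set.pred_ncard_le_ncard_sdiff_singleton (H.neighborSet x) v
    lia
  · rw [← hx1]
    congr 1
    ext y
    simp [Subgraph.deleteEdges_adj, hxv, hxu]

theorem ncard_verts_le_maxKEndedOrder_succ {k : ℕ} {H : G.Subgraph} (hH : H.Connected)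
    (hcard : H.edgeSet.ncard ≤ H.verts.ncard) (hends : endVertexCount H ≤ k) :
    H.verts.ncard ≤ maxKEndedOrder G (k + 1) := by
  rcases isTree_or_ncard_neighborSet_eq_two_or_isTree_deleteEdges hH.coe
    (by rwa [card_edgeSet_coe, Nat.card_coe_set_eq]) with
    htree | hcycle | ⟨u, v, -, hdeg, htree⟩
  · exact IsKEndedTree.ncard_verts_le (Or.inl ⟨htree, by lia⟩)
  · refine IsKEndedTree.ncard_verts_le (Or.inr ⟨by lia, hH, Or.inr fun v hv ↦ ?_⟩)
    rw [← hcycle ⟨v, hv⟩, ncard_neighborSet_coe]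
  · rw [H.deleteEdges_coe_eq, Set.image_singleton, Sym2.map_mk] at htree
    rw [ncard_neighborSet_coe] at hdeg
    exact IsKEndedTree.ncard_verts_le (H := H.deleteEdges {s(u.1, v.1)})
      (Or.inl ⟨htree, (endVertexCount_deleteEdges_le hdeg).trans (by lia)⟩)

end Unicyclic

/-- A rooted tree in `G`, encoded by the map sending each vertex to its parent; the root is its own
parent, and outside `verts` the map is irrelevant. -/
structure RootedSubtree (G : SimpleGraph V) where
  verts : Finset V
  root : V
  parent : V → V
  root_mem : root ∈ verts
  parent_root : parent root = root
  parent_mem : ∀ {x}, x ∈ verts → parent x ∈ verts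
  adj_parent : ∀ {x}, x ∈ verts → x ≠ root → G.Adj x (parent x)
  reaches_root : ∀ {x}, x ∈ verts → Relation.ReflTransGen (fun a b ↦ parent a = b) x root

namespace RootedSubtree

open scoped Classical Finset

variable {G : SimpleGraph V} {T : RootedSubtree G} {a b s u x y z w : V}

/-- `x` is an ancestor of `y` if it is reached from `y` by passing to parents; every vertex is an
ancestor of itself. -/
def IsAncestor (T : RootedSubtree G) (x y : V) : Prop :=
  Relation.ReflTransGen (fun a b ↦ T.parent a = b) y x

/-- The children of a vertex of a rooted tree. -/
noncomputable def children (T : RootedSubtree G) (x : V) : Finset V :=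
  {y ∈ T.verts | y ≠ T.root ∧ T.parent y = x}

/-- The vertices of a rooted tree without children. -/
noncomputable def leaves (T : RootedSubtree G) : Finset V :=
  {x ∈ T.verts | T.children x = ∅}

/-- The vertices of a rooted tree having `x` as an ancestor. -/
noncomputable def descendants (T : RootedSubtree G) (x : V) : Finset V :=
  {y ∈ T.verts | T.IsAncestor x y}

theorem mem_children : y ∈ T.children x ↔ y ∈ T.verts ∧ y ≠ T.root ∧ T.parent y = x :=
  Finset.mem_filter

theorem mem_leaves : x ∈ T.leaves ↔ x ∈ T.verts ∧ T.children x = ∅ :=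
  Finset.mem_filter

theorem mem_descendants : y ∈ T.descendants x ↔ y ∈ T.verts ∧ T.IsAncestor x y :=
  Finset.mem_filter

theorem mem_children_parent (hx : x ∈ T.verts) (hroot : x ≠ T.root) :
    x ∈ T.children (T.parent x) :=
  mem_children.2 ⟨hx, hroot, rfl⟩

theorem parent_notMem_leaves (hx : x ∈ T.verts) (hroot : x ≠ T.root) : T.parent x ∉ T.leaves :=
  fun h ↦ Finset.ne_empty_of_mem (mem_children_parent hx hroot) (mem_leaves.1 h).2

namespace IsAncestor

@[refl]
theorem refl (x : V) : T.IsAncestor x x :=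
  Relation.ReflTransGen.refl

@[trans]
theorem trans (hxy : T.IsAncestor x y) (hyz : T.IsAncestor y z) : T.IsAncestor x z :=
  Relation.ReflTransGen.trans hyz hxy

theorem of_parent (h : T.IsAncestor x (T.parent y)) : T.IsAncestor x y :=
  Relation.ReflTransGen.head rfl h

theorem parent (h : T.IsAncestor x y) (hne : y ≠ x) : T.IsAncestor x (T.parent y) := by
  obtain rfl | ⟨_, rfl, h'⟩ := Relation.ReflTransGen.cases_head h
  exacts [(hne rfl).elim, h']

theorem mem (h : T.IsAncestor x y) (hy : y ∈ T.verts) : x ∈ T.verts := by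
  induction h with
  | refl => exact hy
  | tail _ hab hb => exact hab ▸ T.parent_mem hb

theorem eq_root (h : T.IsAncestor x T.root) : x = T.root := by
  induction h with
  | refl => rfl
  | tail _ hab hb => rw [← hab, hb, T.parent_root]

theorem exists_child (h : T.IsAncestor x y) (hy : y ∈ T.verts) (hne : y ≠ x) :
    ∃ z ∈ T.children x, T.IsAncestor z y := by
  induction h with
  | refl => exact (hne rfl).elim
  | @tail z x hyz hzx ih =>
    by_cases hz : z = T.root
    · have hxz : x = z := by rw [← hzx, hz, T.parent_root]
      exact hxz ▸ ih (hxz ▸ hne)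
    · exact ⟨z, mem_children.2 ⟨IsAncestor.mem hyz hy, hz, hzx⟩, hyz⟩

end IsAncestor

theorem isAncestor_parent (T : RootedSubtree G) (x : V) : T.IsAncestor (T.parent x) x :=
  (IsAncestor.refl _).of_parent

theorem not_isAncestor_parent (hx : x ∈ T.verts) (hroot : x ≠ T.root) :
    ¬T.IsAncestor x (T.parent x) := by
  intro h
  have hbelow : ∀ y, T.IsAncestor y x → T.IsAncestor x y := by
    intro y hy
    induction hy with
    | refl => rfl
    | @tail y _ _ hyz ih =>
      obtain rfl | hne := eq_or_ne y x
      exacts [hyz ▸ h, hyz ▸ ih.parent hne]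
  exact hroot (hbelow T.root (T.reaches_root hx)).eq_root

theorem not_isAncestor_of_mem_children (hy : y ∈ T.children x) : ¬T.IsAncestor y x := by
  obtain ⟨hmem, hroot, rfl⟩ := mem_children.1 hy
  exact not_isAncestor_parent hmem hroot

/-- The subgraph of `G` formed by the edges joining the vertices of a rooted tree to their
parents. -/
def subgraph (T : RootedSubtree G) : G.Subgraph where
  verts := T.verts
  Adj x y := y ∈ T.children x ∨ x ∈ T.children y
  adj_sub := by
    rintro x y (h | h) <;> obtain ⟨hmem, hroot, rfl⟩ := mem_children.1 h
    exacts [(T.adj_parent hmem hroot).symm, T.adj_parent hmem hroot]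
  edge_vert := by
    rintro x y (h | h) <;> obtain ⟨hmem, -, rfl⟩ := mem_children.1 h
    exacts [T.parent_mem hmem, hmem]
  symm := ⟨fun _ _ ↦ Or.symm⟩

theorem subgraph_connected (T : RootedSubtree G) : T.subgraph.Connected := by
  have hroot : ∀ x (hx : x ∈ T.verts),
      T.subgraph.coe.Reachable ⟨x, hx⟩ ⟨T.root, T.root_mem⟩ := by
    intro x hx
    have hreach := T.reaches_root hx
    induction hreach using Relation.ReflTransGen.head_induction_on with
    | refl => rfl
    | @head x y hxy _ ih =>
      subst hxy
      obtain hxroot | hxroot := eq_or_ne x T.root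
      · subst hxroot; rfl
      · have hadj : T.subgraph.coe.Adj ⟨x, hx⟩ ⟨T.parent x, T.parent_mem hx⟩ :=
          Or.inr (mem_children_parent hx hxroot)
        exact hadj.reachable.trans (ih _)
  have : Nonempty T.subgraph.verts := ⟨⟨T.root, T.root_mem⟩⟩
  exact ⟨⟨fun x y ↦ (hroot x x.2).trans (hroot y y.2).symm⟩⟩

theorem ncard_edgeSet_subgraph_add_one_le (T : RootedSubtree G) :
    T.subgraph.edgeSet.ncard + 1 ≤ #T.verts := by
  have hsub : T.subgraph.edgeSet ⊆ (T.verts.erase T.root).image fun x ↦ s(T.parent x, x) := by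
    intro e
    induction e using Sym2.ind with | _ x y
    intro (h : y ∈ T.children x ∨ x ∈ T.children y)
    obtain h | h := h <;> obtain ⟨hmem, hroot, rfl⟩ := mem_children.1 h <;>
      simp only [Finset.coe_image, Set.mem_image, Finset.mem_coe, Finset.mem_erase]
    exacts [⟨y, ⟨hroot, hmem⟩, rfl⟩, ⟨x, ⟨hroot, hmem⟩, Sym2.eq_swap⟩]
  have hle := (Set.ncard_le_ncard hsub).trans_eq (Set.ncard_coe_finset _)
  have := hle.trans Finset.card_image_le
  have := Finset.card_erase_add_one T.root_mem
  lia

theorem neighborSet_subgraph_root : T.subgraph.neighborSet T.root = T.children T.root := by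
  ext y
  simp [subgraph, mem_children]

theorem neighborSet_subgraph (hx : x ∈ T.verts) (hroot : x ≠ T.root) :
    T.subgraph.neighborSet x = insert (T.parent x) (T.children x : Set V) := by
  ext y
  have := T.parent_mem hx
  simp only [subgraph, mem_children, Subgraph.mem_neighborSet, Set.mem_insert_iff, Finset.mem_coe]
  tauto

theorem ncard_neighborSet_subgraph (hx : x ∈ T.verts) (hroot : x ≠ T.root) :
    (T.subgraph.neighborSet x).ncard = #(T.children x) + 1 := by
  have hparent : T.parent x ∉ T.children x := fun h ↦
    not_isAncestor_of_mem_children h (T.isAncestor_parent x)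
  rw [neighborSet_subgraph hx hroot, ← Finset.coe_insert, Set.ncard_coe_finset,
    Finset.card_insert_of_notMem hparent]

theorem root_notMem_leaves (h : 2 ≤ #(T.children T.root)) : T.root ∉ T.leaves := by
  intro hroot
  rw [(mem_leaves.1 hroot).2, Finset.card_empty] at h
  lia

theorem setOf_endVertex_subgraph (h : 2 ≤ #(T.children T.root)) :
    {x | x ∈ T.subgraph.verts ∧ (T.subgraph.neighborSet x).ncard = 1} = T.leaves := by
  ext x
  obtain rfl | hroot := eq_or_ne x T.root
  · have hleaf := root_notMem_leaves h
    rw [Set.mem_ofPred, neighborSet_subgraph_root, Set.ncard_coe_finset, Finset.mem_coe]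
    exact iff_of_false (by lia) hleaf
  · rw [Finset.mem_coe, mem_leaves]
    refine and_congr_right fun hx ↦ ?_
    rw [ncard_neighborSet_subgraph hx hroot, Nat.add_eq_right, Finset.card_eq_zero]

theorem endVertexCount_subgraph (h : 2 ≤ #(T.children T.root)) :
    endVertexCount T.subgraph = #T.leaves := by
  rw [endVertexCount, setOf_endVertex_subgraph h, Set.ncard_coe_finset]

theorem card_verts_le_maxKEndedOrder [Finite V] {k : ℕ} (h : 2 ≤ #(T.children T.root))
    (hleaves : #T.leaves ≤ k) : #T.verts ≤ maxKEndedOrder G k := by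
  have hverts : T.subgraph.verts.ncard = #T.verts := Set.ncard_coe_finset _
  have hends : endVertexCount T.subgraph ≤ k := (endVertexCount_subgraph h).trans_le hleaves
  rw [← hverts]
  refine IsKEndedTree.ncard_verts_le (Or.inl ⟨?_, hends⟩)
  exact isTree_coe_of_ncard_edgeSet_add_one_le T.subgraph_connected
    (hverts ▸ T.ncard_edgeSet_subgraph_add_one_le)

theorem neighborSet_eq_of_ncard_eq_one {H : G.Subgraph} (hle : T.subgraph ≤ H)
    (h : 2 ≤ #(T.children T.root)) (hx : x ∈ T.verts) (hend : (H.neighborSet x).ncard = 1) :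
    x ∈ T.leaves ∧ H.neighborSet x = {T.parent x} := by
  obtain ⟨y, hy⟩ := Set.ncard_eq_one.1 hend
  have hsub : T.subgraph.neighborSet x ⊆ {y} := hy ▸ Subgraph.neighborSet_subset_of_subgraph hle x
  have hcard : (T.subgraph.neighborSet x).ncard ≤ 1 := by
    simpa only [Set.ncard_singleton] using Set.ncard_le_ncard hsub
  obtain rfl | hroot := eq_or_ne x T.root
  · rw [neighborSet_subgraph_root, Set.ncard_coe_finset] at hcard
    lia
  · rw [ncard_neighborSet_subgraph hx hroot] at hcard
    rw [neighborSet_subgraph hx hroot] at hsub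
    have hparent : T.parent x = y := hsub (Set.mem_insert _ _)
    exact ⟨mem_leaves.2 ⟨hx, Finset.card_eq_zero.1 (by lia)⟩, hparent ▸ hy⟩

theorem card_verts_le_of_adj_of_ne_parent [Finite V] {k : ℕ} (h : 2 ≤ #(T.children T.root))
    (ha : a ∈ T.verts) (hb : b ∈ T.verts) (hab : G.Adj a b) (hpa : T.parent a ≠ b)
    (hpb : T.parent b ≠ a) (hleaves : #((T.leaves.erase a).erase b) ≤ k) :
    #T.verts ≤ maxKEndedOrder G (k + 1) := by
  set H : G.Subgraph := T.subgraph ⊔ G.subgraphOfAdj hab with hH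
  have hverts : H.verts = T.verts := by
    rw [hH, Subgraph.verts_sup, subgraphOfAdj_verts]
    exact Set.union_eq_left.2 (Set.insert_subset ha (Set.singleton_subset_iff.2 hb))
  have hconn : H.Connected := T.subgraph_connected.mono le_sup_left hverts.symm
  have hedges : H.edgeSet.ncard ≤ H.verts.ncard := by
    rw [hverts, Set.ncard_coe_finset, hH, Subgraph.edgeSet_sup, edgeSet_subgraphOfAdj,
      Set.union_singleton]
    exact (Set.ncard_insert_le _ _).trans T.ncard_edgeSet_subgraph_add_one_le
  have hends : {x | x ∈ H.verts ∧ (H.neighborSet x).ncard = 1} ⊆ (T.leaves.erase a).erase b := by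
    rintro x ⟨hx, hend⟩
    obtain ⟨hleaf, hnbr⟩ :=
      neighborSet_eq_of_ncard_eq_one (H := H) le_sup_left h (by simpa [hverts] using hx) hend
    have hHab : H.Adj a b := Or.inr (by simp)
    rw [Finset.mem_coe, Finset.mem_erase, Finset.mem_erase]
    refine ⟨?_, ?_, hleaf⟩ <;> rintro rfl
    · exact hpb (hnbr ▸ (show a ∈ H.neighborSet x from hHab.symm)).symm
    · exact hpa (hnbr ▸ (show b ∈ H.neighborSet x from hHab)).symm
  rw [← Set.ncard_coe_finset T.verts, ← hverts]
  refine ncard_verts_le_maxKEndedOrder_succ hconn hedges ?_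
  exact (Set.ncard_le_ncard hends).trans ((Set.ncard_coe_finset _).trans_le hleaves)

theorem card_verts_le_of_adj_parent [Finite V] {k : ℕ} (h : 2 ≤ #(T.children T.root))
    (hx : x ∈ T.verts) (hroot : x ≠ T.root)
    (hleaves : #((T.leaves.erase x).erase (T.parent x)) ≤ k) :
    #T.verts ≤ maxKEndedOrder G (k + 1) := by
  rw [Finset.erase_eq_of_notMem
    fun hmem ↦ parent_notMem_leaves hx hroot (Finset.mem_of_mem_erase hmem)] at hleaves
  have := Finset.pred_card_le_card_erase (s := T.leaves) (a := x)
  exact card_verts_le_maxKEndedOrder h (by lia)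

theorem card_verts_le_of_adj [Finite V] {k : ℕ} (h : 2 ≤ #(T.children T.root))
    (ha : a ∈ T.verts) (hb : b ∈ T.verts) (hab : G.Adj a b)
    (hleaves : #((T.leaves.erase a).erase b) ≤ k) : #T.verts ≤ maxKEndedOrder G (k + 1) := by
  have hroot : ∀ {x y}, G.Adj x y → T.parent x = y → x ≠ T.root := by
    rintro x y hxy rfl rfl
    exact hxy.ne T.parent_root.symm
  by_cases hpa : T.parent a = b
  · exact card_verts_le_of_adj_parent h ha (hroot hab hpa) (hpa ▸ hleaves)
  by_cases hpb : T.parent b = a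
  · rw [Finset.erase_right_comm] at hleaves
    exact card_verts_le_of_adj_parent h hb (hroot hab.symm hpb) (hpb ▸ hleaves)
  exact card_verts_le_of_adj_of_ne_parent h ha hb hab hpa hpb hleaves

section Attach

variable {v : V}

theorem ne_root_of_not_isAncestor (hy : y ∈ T.verts) (hanc : ¬T.IsAncestor x y) : x ≠ T.root := by
  rintro rfl
  exact hanc (T.reaches_root hy)

theorem reflTransGen_update (hy : T.IsAncestor w y)
    (hx : T.IsAncestor x y →
      Relation.ReflTransGen (fun a b ↦ Function.update T.parent x v a = b) x w) :
    Relation.ReflTransGen (fun a b ↦ Function.update T.parent x v a = b) y w := by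
  induction hy using Relation.ReflTransGen.head_induction_on with
  | refl => rfl
  | @head y _ hyz _ ih =>
    obtain rfl | hyx := eq_or_ne y x
    · exact hx (.refl y)
    · subst hyz
      exact (ih fun h ↦ hx h.of_parent).head (Function.update_of_ne hyx ..)

/-- The rooted tree in which `x` is made a child of `v`: a vertex `x` outside of the tree is added
to it, while a vertex `x` of the tree is moved together with all of its descendants. -/
noncomputable def attach (T : RootedSubtree G) (hv : v ∈ T.verts) (hanc : ¬T.IsAncestor x v)
    (hadj : G.Adj x v) : RootedSubtree G where
  verts := insert x T.verts
  root := T.root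
  parent := Function.update T.parent x v
  root_mem := Finset.mem_insert_of_mem T.root_mem
  parent_root := by
    rw [Function.update_of_ne (ne_root_of_not_isAncestor hv hanc).symm, T.parent_root]
  parent_mem {y} hy := by
    obtain rfl | hyx := eq_or_ne y x
    · rw [Function.update_self]
      exact Finset.mem_insert_of_mem hv
    · rw [Function.update_of_ne hyx]
      exact Finset.mem_insert_of_mem (T.parent_mem (Finset.mem_of_mem_insert_of_ne hy hyx))
  adj_parent {y} hy hroot := by
    obtain rfl | hyx := eq_or_ne y x
    · rwa [Function.update_self]
    · rw [Function.update_of_ne hyx]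
      exact T.adj_parent (Finset.mem_of_mem_insert_of_ne hy hyx) hroot
  reaches_root {y} hy := by
    have hv' := reflTransGen_update (v := v) (T.reaches_root hv) fun h ↦ (hanc h).elim
    have hx : Relation.ReflTransGen (fun a b ↦ Function.update T.parent x v a = b) x T.root :=
      .head (Function.update_self ..) hv'
    obtain rfl | hy := Finset.mem_insert.1 hy
    exacts [hx, reflTransGen_update (T.reaches_root hy) fun _ ↦ hx]

theorem parent_attach_self (hv : v ∈ T.verts) (hanc : ¬T.IsAncestor x v) (hadj : G.Adj x v) :
    (T.attach hv hanc hadj).parent x = v := by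
  simp only [attach, Function.update_self]

theorem parent_attach_of_ne (hv : v ∈ T.verts) (hanc : ¬T.IsAncestor x v) (hadj : G.Adj x v)
    (hyx : y ≠ x) : (T.attach hv hanc hadj).parent y = T.parent y := by
  simp only [attach, Function.update_of_ne hyx]

theorem verts_attach (hx : x ∈ T.verts) (hv : v ∈ T.verts) (hanc : ¬T.IsAncestor x v)
    (hadj : G.Adj x v) : (T.attach hv hanc hadj).verts = T.verts :=
  Finset.insert_eq_of_mem hx

theorem erase_children_subset_children_attach (hv : v ∈ T.verts) (hanc : ¬T.IsAncestor x v)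
    (hadj : G.Adj x v) (y : V) :
    (T.children y).erase x ⊆ (T.attach hv hanc hadj).children y := by
  intro z hz
  obtain ⟨hzx, hz⟩ := Finset.mem_erase.1 hz
  obtain ⟨hzmem, hroot, hzy⟩ := mem_children.1 hz
  exact mem_children.2 ⟨Finset.mem_insert_of_mem hzmem, hroot,
    (parent_attach_of_ne hv hanc hadj hzx).trans hzy⟩

theorem mem_children_attach (hv : v ∈ T.verts) (hanc : ¬T.IsAncestor x v) (hadj : G.Adj x v) :
    x ∈ (T.attach hv hanc hadj).children v := by
  have hroot := ne_root_of_not_isAncestor hv hanc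
  exact mem_children.2 ⟨Finset.mem_insert_self .., hroot, parent_attach_self hv hanc hadj⟩

theorem notMem_leaves_attach (hv : v ∈ T.verts) (hanc : ¬T.IsAncestor x v) (hadj : G.Adj x v) :
    v ∉ (T.attach hv hanc hadj).leaves :=
  fun h ↦ Finset.ne_empty_of_mem (mem_children_attach hv hanc hadj) (mem_leaves.1 h).2

end Attach

/-- The rooted tree obtained by restricting to a set of vertices that contains the root and is
closed under passing to parents. -/
def restrict (T : RootedSubtree G) (W : Finset V) (hsub : W ⊆ T.verts) (hroot : T.root ∈ W)
    (hparent : ∀ x ∈ W, T.parent x ∈ W) : RootedSubtree G where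
  verts := W
  root := T.root
  parent := T.parent
  root_mem := hroot
  parent_root := T.parent_root
  parent_mem {x} := hparent x
  adj_parent hx := T.adj_parent (hsub hx)
  reaches_root hx := T.reaches_root (hsub hx)

theorem mem_children_restrict {W : Finset V} {hsub : W ⊆ T.verts} {hroot : T.root ∈ W}
    {hparent : ∀ x ∈ W, T.parent x ∈ W} :
    y ∈ (T.restrict W hsub hroot hparent).children x ↔ y ∈ W ∧ y ∈ T.children x := by
  rw [mem_children, mem_children]
  exact and_congr_right fun hy ↦ (and_iff_right (hsub hy)).symm

/-- `T'` arises from `T` by a modification that keeps the root, adds no vertices, and takes away no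
child except possibly `z` from the vertices it keeps. -/
structure IsReductionAt (T T' : RootedSubtree G) (z : V) : Prop where
  root_eq : T'.root = T.root
  verts_subset : T'.verts ⊆ T.verts
  erase_children_subset : ∀ y ∈ T'.verts, (T.children y).erase z ⊆ T'.children y

namespace IsReductionAt

variable {T' : RootedSubtree G}

theorem leaves_subset (h : T.IsReductionAt T' z) :
    T'.leaves ⊆ insert (T.parent z) T.leaves := by
  intro y hy
  obtain ⟨hmem, hleaf⟩ := mem_leaves.1 hy
  have hsub := hleaf ▸ h.erase_children_subset y hmem
  by_cases hz : z ∈ T.children y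
  · exact (mem_children.1 hz).2.2 ▸ Finset.mem_insert_self ..
  · rw [Finset.erase_eq_of_notMem hz, Finset.subset_empty] at hsub
    exact Finset.mem_insert_of_mem (mem_leaves.2 ⟨h.verts_subset hmem, hsub⟩)

theorem leaves_subset_of_mem_children (h : T.IsReductionAt T' z) (hw : w ∈ T.children (T.parent z))
    (hwz : w ≠ z) : T'.leaves ⊆ T.leaves := by
  intro y hy
  obtain rfl | hleaf := Finset.mem_insert.1 (h.leaves_subset hy)
  · obtain ⟨hmem, hleaf⟩ := mem_leaves.1 hy
    have hw' := h.erase_children_subset _ hmem (Finset.mem_erase.2 ⟨hwz, hw⟩)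
    exact (Finset.ne_empty_of_mem hw' hleaf).elim
  · exact hleaf

theorem two_le_card_children_root (h : T.IsReductionAt T' z) (hroot : 2 < #(T.children T.root)) :
    2 ≤ #(T'.children T'.root) := by
  have hle := Finset.card_le_card (h.erase_children_subset _ T'.root_mem)
  have := Finset.pred_card_le_card_erase (s := T.children T'.root) (a := z)
  rw [h.root_eq] at *
  lia

end IsReductionAt

theorem isReductionAt_attach (hx : x ∈ T.verts) (hs : s ∈ T.verts) (hanc : ¬T.IsAncestor x s)
    (hadj : G.Adj x s) : T.IsReductionAt (T.attach hs hanc hadj) x :=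
  ⟨rfl, (verts_attach hx hs hanc hadj).le,
    fun y _ ↦ erase_children_subset_children_attach hs hanc hadj y⟩

theorem parent_attach_mem_erase_parent (hx : x ∈ T.verts) (hroot : T.parent x ≠ T.root)
    (hchildren : T.children (T.parent x) = {x}) (hs : s ∈ T.verts) (hanc : ¬T.IsAncestor x s)
    (hadj : G.Adj x s) (hsx : s ≠ T.parent x) (hy : y ∈ T.verts.erase (T.parent x)) :
    (T.attach hs hanc hadj).parent y ∈ T.verts.erase (T.parent x) := by
  obtain ⟨-, hy⟩ := Finset.mem_erase.1 hy
  obtain rfl | hyx := eq_or_ne y x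
  · rw [parent_attach_self]
    exact Finset.mem_erase.2 ⟨hsx, hs⟩
  · rw [parent_attach_of_ne hs hanc hadj hyx]
    refine Finset.mem_erase.2 ⟨fun h ↦ hyx ?_, T.parent_mem hy⟩
    have hyroot : y ≠ T.root := by
      rintro rfl
      exact hroot (h.symm.trans T.parent_root)
    exact Finset.mem_singleton.1 (hchildren ▸ h ▸ mem_children_parent hy hyroot)

theorem exists_isReductionAt_parent (hx : x ∈ T.verts) (hroot : T.parent x ≠ T.root)
    (hchildren : T.children (T.parent x) = {x}) (hs : s ∈ T.leaves) (hanc : ¬T.IsAncestor x s)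
    (hadj : G.Adj x s) :
    ∃ T', T.IsReductionAt T' (T.parent x) ∧ T'.verts = T.verts.erase (T.parent x) ∧
      s ∉ T'.leaves := by
  have hs' := (mem_leaves.1 hs).1
  have hxroot := ne_root_of_not_isAncestor hs' hanc
  have hsx : s ≠ T.parent x := ne_of_mem_of_not_mem hs (parent_notMem_leaves hx hxroot)
  have hsub : T.verts.erase (T.parent x) ⊆ (T.attach hs' hanc hadj).verts :=
    (Finset.erase_subset ..).trans (Finset.subset_insert ..)
  refine ⟨(T.attach hs' hanc hadj).restrict (T.verts.erase (T.parent x)) hsub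
    (Finset.mem_erase.2 ⟨hroot.symm, T.root_mem⟩)
    fun y hy ↦ parent_attach_mem_erase_parent hx hroot hchildren hs' hanc hadj hsx hy,
    ⟨rfl, Finset.erase_subset .., fun y hy w hw ↦ ?_⟩, rfl, fun h ↦ ?_⟩
  · obtain ⟨hwp, hw⟩ := Finset.mem_erase.1 hw
    obtain ⟨hwmem, -, hwy⟩ := mem_children.1 hw
    have hwx : w ≠ x := fun h ↦ (Finset.mem_erase.1 hy).1 (h ▸ hwy.symm)
    exact mem_children_restrict.2 ⟨Finset.mem_erase.2 ⟨hwp, hwmem⟩,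
      erase_children_subset_children_attach hs' hanc hadj y (Finset.mem_erase.2 ⟨hwx, hw⟩)⟩
  · refine Finset.ne_empty_of_mem (a := x) ?_ (mem_leaves.1 h).2
    exact mem_children_restrict.2 ⟨Finset.mem_erase.2 ⟨(T.adj_parent hx hxroot).ne, hx⟩,
      mem_children_attach hs' hanc hadj⟩

theorem exists_isReductionAt_sdiff_descendants (hroot : u ≠ T.root) :
    ∃ T', T.IsReductionAt T' u ∧ T'.verts = T.verts \ T.descendants u := by
  have hmem : ∀ {y}, y ∈ T.verts \ T.descendants u ↔ y ∈ T.verts ∧ ¬T.IsAncestor u y := by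
    intro y
    rw [Finset.mem_sdiff, mem_descendants]
    tauto
  refine ⟨T.restrict (T.verts \ T.descendants u) Finset.sdiff_subset
    (hmem.2 ⟨T.root_mem, fun h ↦ hroot h.eq_root⟩)
    fun y hy ↦ hmem.2 ⟨T.parent_mem (hmem.1 hy).1, fun h ↦ (hmem.1 hy).2 h.of_parent⟩,
    ⟨rfl, Finset.sdiff_subset, fun y hy w hw ↦ ?_⟩, rfl⟩
  obtain ⟨hwu, hw⟩ := Finset.mem_erase.1 hw
  obtain ⟨hwmem, -, rfl⟩ := mem_children.1 hw
  exact mem_children_restrict.2 ⟨hmem.2 ⟨hwmem, fun h ↦ (hmem.1 hy).2 (h.parent hwu)⟩, hw⟩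

theorem descendants_subset (T : RootedSubtree G) (u : V) : T.descendants u ⊆ T.verts :=
  Finset.filter_subset ..

theorem mem_descendants_self (hx : x ∈ T.verts) : x ∈ T.descendants x :=
  mem_descendants.2 ⟨hx, .refl x⟩

theorem descendants_of_mem_leaves (hs : s ∈ T.leaves) : T.descendants s = {s} := by
  obtain ⟨hs, hleaf⟩ := mem_leaves.1 hs
  refine Finset.eq_singleton_iff_unique_mem.2 ⟨mem_descendants_self hs, fun y hy ↦ ?_⟩
  obtain ⟨hy, hsy⟩ := mem_descendants.1 hy
  by_contra hne
  obtain ⟨z, hz, -⟩ := hsy.exists_child hy hne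
  exact Finset.ne_empty_of_mem hz hleaf

theorem descendants_parent (hu : u ∈ T.verts) (hchildren : T.children (T.parent u) = {u}) :
    T.descendants (T.parent u) = insert (T.parent u) (T.descendants u) := by
  ext y
  rw [Finset.mem_insert, mem_descendants, mem_descendants]
  refine ⟨fun ⟨hy, huy⟩ ↦ or_iff_not_imp_left.2 fun hne ↦ ⟨hy, ?_⟩, ?_⟩
  · obtain ⟨z, hz, hzy⟩ := huy.exists_child hy hne
    rw [hchildren, Finset.mem_singleton] at hz
    exact hz ▸ hzy
  · rintro (rfl | ⟨hy, huy⟩)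
    exacts [⟨T.parent_mem hu, .refl _⟩, ⟨hy, (T.isAncestor_parent _).trans huy⟩]

theorem card_descendants_lt_of_mem_children (hy : y ∈ T.children x) :
    #(T.descendants y) < #(T.descendants x) := by
  have hanc := not_isAncestor_of_mem_children hy
  obtain ⟨hymem, -, rfl⟩ := mem_children.1 hy
  have hsub : T.descendants y ⊆ T.descendants (T.parent y) := fun z hz ↦
    have ⟨hz, hyz⟩ := mem_descendants.1 hz
    mem_descendants.2 ⟨hz, (T.isAncestor_parent y).trans hyz⟩
  exact Finset.card_lt_card (Finset.ssubset_iff_of_subset hsub |>.2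
    ⟨T.parent y, mem_descendants_self (T.parent_mem hymem), fun h ↦ hanc (mem_descendants.1 h).2⟩)

theorem exists_leaf_of_mem (hx : x ∈ T.verts) : ∃ s ∈ T.leaves, T.IsAncestor x s := by
  obtain ⟨y, hy, hmin⟩ := (T.descendants x).exists_min_image (fun y ↦ #(T.descendants y))
    ⟨x, mem_descendants_self hx⟩
  obtain ⟨hymem, hxy⟩ := mem_descendants.1 hy
  refine ⟨y, mem_leaves.2 ⟨hymem, Finset.eq_empty_of_forall_notMem fun z hz ↦ ?_⟩, hxy⟩
  obtain ⟨hzmem, -, rfl⟩ := mem_children.1 hz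
  exact (hmin z (mem_descendants.2 ⟨hzmem, hxy.trans (T.isAncestor_parent _)⟩)).not_gt
    (card_descendants_lt_of_mem_children hz)

/-- The descendants of `u` form a pendant path of the tree ending in the leaf `s`, with the further
property that no other leaf is adjacent in `G` to a vertex of that path. -/
structure IsPendant (T : RootedSubtree G) (u s : V) : Prop where
  mem : u ∈ T.verts
  ne_root : u ≠ T.root
  isAncestor : T.IsAncestor u s
  eq_of_isAncestor : ∀ t ∈ T.leaves, T.IsAncestor u t → t = s
  not_adj : ∀ t ∈ T.leaves, t ≠ s → ∀ y ∈ T.descendants u, ¬G.Adj t y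

/-- A largest `(k + 1)`-ended tree, rooted at a branch vertex, in the situation excluded by the
theorem: it exceeds every `k`-ended tree by at least `l ≥ 2` vertices. -/
structure IsExtremal (T : RootedSubtree G) (k l : ℕ) : Prop where
  two_lt_card_children_root : 2 < #(T.children T.root)
  card_leaves : #T.leaves = k + 1
  card_verts : #T.verts = maxKEndedOrder G (k + 1)
  add_le_card_verts : maxKEndedOrder G k + l ≤ #T.verts
  two_le : 2 ≤ l

namespace IsExtremal

variable {k l : ℕ} {s t u : V} {T' : RootedSubtree G}

theorem root_notMem_leaves (hT : T.IsExtremal k l) : T.root ∉ T.leaves :=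
  RootedSubtree.root_notMem_leaves hT.two_lt_card_children_root.le

theorem parent_ne_root_of_children_parent (hT : T.IsExtremal k l)
    (h : T.children (T.parent x) = {x}) : T.parent x ≠ T.root := by
  intro hroot
  have := hT.two_lt_card_children_root
  rw [← hroot, h, Finset.card_singleton] at this
  lia

theorem card_erase_erase_leaves (hT : T.IsExtremal k l) (hs : s ∈ T.leaves) (ht : t ∈ T.leaves)
    (hts : t ≠ s) : #((T.leaves.erase s).erase t) + 1 = k := by
  rw [Finset.card_erase_add_one (Finset.mem_erase.2 ⟨hts, ht⟩), Finset.card_erase_of_mem hs,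
    hT.card_leaves, Nat.add_sub_cancel]

variable [Finite V]

theorem children_parent_of_isReductionAt (hT : T.IsExtremal k l) (h : T.IsReductionAt T' z)
    (hz : z ∈ T.verts) (hroot : z ≠ T.root) (hs : s ∈ T.leaves) (hs' : s ∉ T'.leaves)
    (hcard : #T.verts < #T'.verts + l) : T.children (T.parent z) = {z} := by
  by_contra hne
  obtain ⟨w, hw, hwz⟩ : ∃ w ∈ T.children (T.parent z), w ≠ z := by
    by_contra! hall
    exact hne (Finset.eq_singleton_iff_unique_mem.2 ⟨mem_children_parent hz hroot, hall⟩)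
  have hleaves : T'.leaves ⊆ T.leaves.erase s :=
    Finset.subset_erase.2 ⟨h.leaves_subset_of_mem_children hw hwz, hs'⟩
  have hle : #T'.leaves ≤ k := by
    have := Finset.card_le_card hleaves
    rwa [Finset.card_erase_of_mem hs, hT.card_leaves, Nat.add_sub_cancel] at this
  have := card_verts_le_maxKEndedOrder
    (h.two_le_card_children_root hT.two_lt_card_children_root) hle
  have := hT.add_le_card_verts
  lia

theorem not_adj_parent_of_isReductionAt (hT : T.IsExtremal k l) (h : T.IsReductionAt T' z)
    (hz : T.parent z ∈ T'.verts) (hs : s ∈ T.leaves) (hs' : s ∉ T'.leaves)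
    (ht : t ∈ T.leaves) (hts : t ≠ s) (ht' : t ∈ T'.verts) (hcard : #T.verts < #T'.verts + l) :
    ¬G.Adj t (T.parent z) := by
  intro hadj
  have hsub : (T'.leaves.erase t).erase (T.parent z) ⊆ (T.leaves.erase s).erase t := by
    intro y hy
    simp only [Finset.mem_erase] at hy ⊢
    obtain ⟨hyz, hyt, hy⟩ := hy
    exact ⟨hyt, ne_of_mem_of_not_mem hy hs',
      Finset.mem_of_mem_insert_of_ne (h.leaves_subset hy) hyz⟩
  have := card_verts_le_of_adj (h.two_le_card_children_root hT.two_lt_card_children_root) ht' hz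
    hadj (Finset.card_le_card hsub)
  rw [hT.card_erase_erase_leaves hs ht hts] at this
  have := hT.add_le_card_verts
  lia

theorem not_adj_of_mem_leaves (hT : T.IsExtremal k l) (hs : s ∈ T.leaves) (ht : t ∈ T.leaves) :
    ¬G.Adj s t := by
  intro hadj
  have := card_verts_le_of_adj hT.two_lt_card_children_root.le (mem_leaves.1 hs).1
    (mem_leaves.1 ht).1 hadj le_rfl
  rw [hT.card_erase_erase_leaves hs ht hadj.ne'] at this
  have := hT.add_le_card_verts
  have := hT.two_le
  lia

theorem mem_of_adj_leaf (hT : T.IsExtremal k l) (hs : s ∈ T.leaves) (hadj : G.Adj x s) :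
    x ∈ T.verts := by
  by_contra hx
  have hs' := (mem_leaves.1 hs).1
  have hanc : ¬T.IsAncestor x s := fun h ↦ hx (h.mem hs')
  set T' := T.attach hs' hanc hadj with hT'
  have hchildren : ∀ y, T.children y ⊆ T'.children y := fun y ↦ by
    have hxy : x ∉ T.children y := fun h ↦ hx (mem_children.1 h).1
    rw [← Finset.erase_eq_of_notMem hxy]
    exact erase_children_subset_children_attach hs' hanc hadj y
  have hleaves : T'.leaves ⊆ insert x (T.leaves.erase s) := by
    intro y hy
    obtain ⟨hmem, hleaf⟩ := mem_leaves.1 hy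
    refine Finset.mem_insert.2 ((Finset.mem_insert.1 hmem).imp_right fun hyT ↦ ?_)
    have hys : y ≠ s := by
      rintro rfl
      exact Finset.ne_empty_of_mem (mem_children_attach hs' hanc hadj) hleaf
    exact Finset.mem_erase.2
      ⟨hys, mem_leaves.2 ⟨hyT, Finset.subset_empty.1 (hleaf ▸ hchildren y)⟩⟩
  have hcard : #T'.leaves ≤ k + 1 := by
    have := (Finset.card_le_card hleaves).trans (Finset.card_insert_le _ _)
    rwa [Finset.card_erase_add_one hs, hT.card_leaves] at this
  have hroot : 2 ≤ #(T'.children T'.root) :=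
    hT.two_lt_card_children_root.le.trans (Finset.card_le_card (hchildren T.root))
  have hverts : #T'.verts = #T.verts + 1 := Finset.card_insert_of_notMem hx
  have := card_verts_le_maxKEndedOrder hroot hcard
  have := hT.card_verts
  lia

theorem children_parent_of_adj_leaf (hT : T.IsExtremal k l) (hs : s ∈ T.leaves)
    (hadj : G.Adj x s) (hanc : ¬T.IsAncestor x s) : T.children (T.parent x) = {x} := by
  have hx := hT.mem_of_adj_leaf hs hadj
  have hs' := (mem_leaves.1 hs).1
  refine hT.children_parent_of_isReductionAt (isReductionAt_attach hx hs' hanc hadj) hx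
    (ne_root_of_not_isAncestor hs' hanc) hs (notMem_leaves_attach hs' hanc hadj) ?_
  have := hT.two_le
  rw [verts_attach hx]
  lia

theorem not_adj_parent_of_adj_leaf (hT : T.IsExtremal k l) (hs : s ∈ T.leaves)
    (hadj : G.Adj x s) (hanc : ¬T.IsAncestor x s) (ht : t ∈ T.leaves) (hts : t ≠ s) :
    ¬G.Adj t (T.parent x) := by
  have hx := hT.mem_of_adj_leaf hs hadj
  have hs' := (mem_leaves.1 hs).1
  have hverts := verts_attach hx hs' hanc hadj
  refine hT.not_adj_parent_of_isReductionAt (isReductionAt_attach hx hs' hanc hadj)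
    (hverts ▸ T.parent_mem hx) hs (notMem_leaves_attach hs' hanc hadj) ht hts
    (hverts ▸ (mem_leaves.1 ht).1) ?_
  have := hT.two_le
  rw [verts_attach hx]
  lia

theorem children_parent_parent_of_adj_leaf (hT : T.IsExtremal k l) (hs : s ∈ T.leaves)
    (hadj : G.Adj x s) (hanc : ¬T.IsAncestor x s) :
    T.children (T.parent (T.parent x)) = {T.parent x} := by
  have hx := hT.mem_of_adj_leaf hs hadj
  have hchildren := hT.children_parent_of_adj_leaf hs hadj hanc
  have hroot := hT.parent_ne_root_of_children_parent hchildren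
  obtain ⟨T', hred, hverts, hs'⟩ := exists_isReductionAt_parent hx hroot hchildren hs hanc hadj
  refine hT.children_parent_of_isReductionAt hred (T.parent_mem hx) hroot hs hs' ?_
  have := hT.two_le
  have := Finset.card_erase_add_one (T.parent_mem hx)
  rw [hverts]
  lia

theorem not_adj_parent_parent_of_adj_leaf (hT : T.IsExtremal k l) (hs : s ∈ T.leaves)
    (hadj : G.Adj x s) (hanc : ¬T.IsAncestor x s) (ht : t ∈ T.leaves) (hts : t ≠ s) :
    ¬G.Adj t (T.parent (T.parent x)) := by
  have hx := hT.mem_of_adj_leaf hs hadj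
  have hxroot := ne_root_of_not_isAncestor (mem_leaves.1 hs).1 hanc
  have hchildren := hT.children_parent_of_adj_leaf hs hadj hanc
  have hroot := hT.parent_ne_root_of_children_parent hchildren
  obtain ⟨T', hred, hverts, hs'⟩ := exists_isReductionAt_parent hx hroot hchildren hs hanc hadj
  have hne := (T.adj_parent (T.parent_mem hx) hroot).ne'
  have htx : t ≠ T.parent x := ne_of_mem_of_not_mem ht (parent_notMem_leaves hx hxroot)
  refine hT.not_adj_parent_of_isReductionAt hred ?_ hs hs' ht hts ?_ ?_
  · exact hverts ▸ Finset.mem_erase.2 ⟨hne, T.parent_mem (T.parent_mem hx)⟩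
  · exact hverts ▸ Finset.mem_erase.2 ⟨htx, (mem_leaves.1 ht).1⟩
  · have := hT.two_le
    have := Finset.card_erase_add_one (T.parent_mem hx)
    rw [hverts]
    lia

theorem children_parent_of_card_descendants_lt (hT : T.IsExtremal k l) (hu : u ∈ T.verts)
    (hroot : u ≠ T.root) (hs : s ∈ T.leaves) (hus : T.IsAncestor u s)
    (hcard : #(T.descendants u) < l) : T.children (T.parent u) = {u} := by
  obtain ⟨T', hred, hverts⟩ := exists_isReductionAt_sdiff_descendants hroot
  have hs' : s ∉ T'.leaves := by
    intro h
    have hmem := hverts ▸ (mem_leaves.1 h).1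
    exact (Finset.mem_sdiff.1 hmem).2 (mem_descendants.2 ⟨(mem_leaves.1 hs).1, hus⟩)
  refine hT.children_parent_of_isReductionAt hred hu hroot hs hs' ?_
  rw [hverts, ← Finset.card_sdiff_add_card_eq_card (T.descendants_subset u)]
  lia

theorem not_adj_parent_of_card_descendants_lt (hT : T.IsExtremal k l) (hu : u ∈ T.verts)
    (hroot : u ≠ T.root) (hs : s ∈ T.leaves) (hus : T.IsAncestor u s) (ht : t ∈ T.leaves)
    (hut : ¬T.IsAncestor u t) (hcard : #(T.descendants u) < l) : ¬G.Adj t (T.parent u) := by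
  obtain ⟨T', hred, hverts⟩ := exists_isReductionAt_sdiff_descendants hroot
  have hmem : ∀ {y}, y ∈ T'.verts ↔ y ∈ T.verts ∧ ¬T.IsAncestor u y := by
    intro y
    rw [hverts, Finset.mem_sdiff, mem_descendants]
    tauto
  have hts : t ≠ s := by
    rintro rfl
    exact hut hus
  refine hT.not_adj_parent_of_isReductionAt hred
    (hmem.2 ⟨T.parent_mem hu, not_isAncestor_parent hu hroot⟩) hs
    (fun h ↦ (hmem.1 (mem_leaves.1 h).1).2 hus) ht hts (hmem.2 ⟨(mem_leaves.1 ht).1, hut⟩) ?_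
  rw [hverts, ← Finset.card_sdiff_add_card_eq_card (T.descendants_subset u)]
  lia

theorem isPendant_self (hT : T.IsExtremal k l) (hs : s ∈ T.leaves) : T.IsPendant s s where
  mem := (mem_leaves.1 hs).1
  ne_root := ne_of_mem_of_not_mem hs hT.root_notMem_leaves
  isAncestor := .refl s
  eq_of_isAncestor t ht hst := by
    rw [← Finset.mem_singleton, ← descendants_of_mem_leaves hs, mem_descendants]
    exact ⟨(mem_leaves.1 ht).1, hst⟩
  not_adj t ht _ y hy := by
    rw [descendants_of_mem_leaves hs, Finset.mem_singleton] at hy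
    exact hy ▸ hT.not_adj_of_mem_leaves ht hs

theorem isPendant_parent (hT : T.IsExtremal k l) (hs : s ∈ T.leaves) (h : T.IsPendant u s)
    (hcard : #(T.descendants u) < l) :
    T.IsPendant (T.parent u) s ∧ #(T.descendants (T.parent u)) = #(T.descendants u) + 1 := by
  have hchildren := hT.children_parent_of_card_descendants_lt h.mem h.ne_root hs h.isAncestor hcard
  have hdesc := descendants_parent h.mem hchildren
  have hnotMem : T.parent u ∉ T.descendants u :=
    fun hu ↦ not_isAncestor_parent h.mem h.ne_root (mem_descendants.1 hu).2
  refine ⟨⟨T.parent_mem h.mem, hT.parent_ne_root_of_children_parent hchildren,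
    (T.isAncestor_parent _).trans h.isAncestor, fun t ht hut ↦ ?_, fun t ht hts y hy ↦ ?_⟩,
    by rw [hdesc, Finset.card_insert_of_notMem hnotMem]⟩
  · have htu : t ≠ T.parent u := ne_of_mem_of_not_mem ht (parent_notMem_leaves h.mem h.ne_root)
    have ht' := hdesc ▸ mem_descendants.2 ⟨(mem_leaves.1 ht).1, hut⟩
    exact h.eq_of_isAncestor t ht (mem_descendants.1 (Finset.mem_of_mem_insert_of_ne ht' htu)).2
  · obtain rfl | hy := Finset.mem_insert.1 (hdesc ▸ hy)
    · exact hT.not_adj_parent_of_card_descendants_lt h.mem h.ne_root hs h.isAncestor ht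
        (fun hut ↦ hts (h.eq_of_isAncestor t ht hut)) hcard
    · exact h.not_adj t ht hts y hy

theorem exists_isPendant (hT : T.IsExtremal k l) (hs : s ∈ T.leaves) {i : ℕ} (hi : i < l) :
    ∃ u, T.IsPendant u s ∧ #(T.descendants u) = i + 1 := by
  induction i with
  | zero =>
    exact ⟨s, hT.isPendant_self hs, by rw [descendants_of_mem_leaves hs, Finset.card_singleton]⟩
  | succ i ih =>
    obtain ⟨u, hu, hcard⟩ := ih (by lia)
    obtain ⟨hpendant, hcard'⟩ := hT.isPendant_parent hs hu (hcard ▸ hi)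
    exact ⟨T.parent u, hpendant, hcard ▸ hcard'⟩

theorem exists_disjoint_pendant (hT : T.IsExtremal k l) {J : Finset V} (hJ : J ⊆ T.leaves)
    (hcard : #J = 3) :
    ∃ E ⊆ T.verts.erase T.root, #E = l * (k - 2) ∧
      (∀ x ∈ T.verts, T.parent x ∈ E → x ∈ E) ∧
      ∀ x ∈ E, ∀ j ∈ J, ¬T.IsAncestor x j ∧ ¬G.Adj j x := by
  have hl := hT.two_le
  choose! u hu hucard using fun s (hs : s ∈ T.leaves) ↦ hT.exists_isPendant hs (i := l - 1) (by lia)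
  have hmem : ∀ {x}, x ∈ (T.leaves \ J).biUnion (fun s ↦ T.descendants (u s)) ↔
      ∃ s ∈ T.leaves, s ∉ J ∧ x ∈ T.verts ∧ T.IsAncestor (u s) x := by
    simp only [Finset.mem_biUnion, Finset.mem_sdiff, mem_descendants, and_assoc, implies_true]
  have hdisj : (↑(T.leaves \ J) : Set V).PairwiseDisjoint fun s ↦ T.descendants (u s) := by
    intro s hs t ht hst
    refine Finset.disjoint_left.2 fun y hys hyt ↦ hst ?_
    obtain ⟨r, hr, hyr⟩ := exists_leaf_of_mem (mem_descendants.1 hys).1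
    have hr_eq : ∀ {s}, s ∈ T.leaves \ J → y ∈ T.descendants (u s) → r = s := fun hs hy ↦
      (hu _ (Finset.mem_sdiff.1 hs).1).eq_of_isAncestor r hr ((mem_descendants.1 hy).2.trans hyr)
    exact (hr_eq hs hys).symm.trans (hr_eq ht hyt)
  refine ⟨(T.leaves \ J).biUnion fun s ↦ T.descendants (u s), fun x hx ↦ ?_, ?_,
    fun x hx hpx ↦ ?_, fun x hx j hj ↦ ?_⟩
  · obtain ⟨s, hs, -, hx, hsx⟩ := hmem.1 hx
    refine Finset.mem_erase.2 ⟨?_, hx⟩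
    rintro rfl
    exact (hu s hs).ne_root hsx.eq_root
  · rw [Finset.card_biUnion hdisj, Finset.sum_const_nat (m := l), Finset.card_sdiff_of_subset hJ,
      hT.card_leaves, hcard, mul_comm]
    · rfl
    · intro s hs
      rw [hucard s (Finset.mem_sdiff.1 hs).1]
      lia
  · obtain ⟨s, hs, hsJ, -, hsx⟩ := hmem.1 hpx
    exact hmem.2 ⟨s, hs, hsJ, hx, hsx.of_parent⟩
  · obtain ⟨s, hs, hsJ, hx, hsx⟩ := hmem.1 hx
    have hjs : j ≠ s := ne_of_mem_of_not_mem hj hsJ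
    exact ⟨fun hxj ↦ hjs ((hu s hs).eq_of_isAncestor j (hJ hj) (hsx.trans hxj)),
      (hu s hs).not_adj j (hJ hj) hjs x (mem_descendants.2 ⟨hx, hsx⟩)⟩

end IsExtremal

/-- Different members of `J` lie in different branches of a rooted tree at its root: no vertex but
the root is an ancestor of two of them. -/
def IsSeparated (T : RootedSubtree G) (J : Finset V) : Prop :=
  ∀ ⦃z⦄, z ∈ T.verts → z ≠ T.root → ∀ ⦃i⦄, i ∈ J → ∀ ⦃j⦄, j ∈ J →
    T.IsAncestor z i → T.IsAncestor z j → i = j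

/-- The members of `J` charging an edge of `G` to `x`. An edge from `j` to `y` is charged to `y`
when `y` is not an ancestor of `j`, and to the child of `y` towards `j` when it is. -/
noncomputable def charges (T : RootedSubtree G) (J : Finset V) (x : V) : Finset V :=
  {j ∈ J | (G.Adj x j ∧ ¬T.IsAncestor x j) ∨
    (x ≠ T.root ∧ T.IsAncestor x j ∧ G.Adj (T.parent x) j)}

theorem mem_charges {J : Finset V} {j : V} : j ∈ T.charges J x ↔ j ∈ J ∧
    ((G.Adj x j ∧ ¬T.IsAncestor x j) ∨
      (x ≠ T.root ∧ T.IsAncestor x j ∧ G.Adj (T.parent x) j)) :=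
  Finset.mem_filter

theorem charges_subset (T : RootedSubtree G) (J : Finset V) (x : V) : T.charges J x ⊆ J :=
  Finset.filter_subset _ _

theorem card_charges_le (T : RootedSubtree G) (J : Finset V) (x : V) : #(T.charges J x) ≤ #J :=
  Finset.card_le_card (T.charges_subset J x)

theorem isAncestor_of_children_parent (hx : x ∈ T.verts) (hroot : x ≠ T.root)
    (hchildren : T.children (T.parent x) = {x}) (hy : y ∈ T.leaves)
    (h : T.IsAncestor (T.parent x) y) : T.IsAncestor x y := by
  obtain ⟨z, hz, hzy⟩ := h.exists_child (mem_leaves.1 hy).1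
    (ne_of_mem_of_not_mem hy (parent_notMem_leaves hx hroot))
  rw [hchildren, Finset.mem_singleton] at hz
  exact hz ▸ hzy

namespace IsExtremal

variable {k l : ℕ} {J : Finset V} {j : V}

theorem degree_le_card_charged [Fintype V] [DecidableRel G.Adj] (hT : T.IsExtremal k l)
    (hJ : J ⊆ T.leaves) (hj : j ∈ J) : G.degree j ≤ #{x ∈ T.verts | j ∈ T.charges J x} := by
  refine Finset.card_le_card_of_surjOn (fun x ↦ if T.IsAncestor x j then T.parent x else x) ?_
  intro y hy
  have hadj : G.Adj y j := ((G.mem_neighborFinset j y).1 hy).symm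
  simp only [Set.mem_image, Finset.coe_filter, Set.mem_ofPred]
  by_cases hyj : T.IsAncestor y j
  · obtain ⟨x, hchild, hxj⟩ := hyj.exists_child (mem_leaves.1 (hJ hj)).1 hadj.ne'
    obtain ⟨hx, hroot, rfl⟩ := mem_children.1 hchild
    exact ⟨x, ⟨hx, mem_charges.2 ⟨hj, Or.inr ⟨hroot, hxj, hadj⟩⟩⟩, if_pos hxj⟩
  · exact ⟨y, ⟨hT.mem_of_adj_leaf (hJ hj) hadj, mem_charges.2 ⟨hj, Or.inl ⟨hadj, hyj⟩⟩⟩,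
      if_neg hyj⟩

section

variable [Finite V] (hT : T.IsExtremal k l) (hJ : J ⊆ T.leaves) (hsep : T.IsSeparated J)
include hT hJ hsep

theorem adj_and_not_isAncestor_of_mem_charges (hx : x ∈ T.verts) (hcard : 1 < #(T.charges J x))
    (hj : j ∈ T.charges J x) : G.Adj x j ∧ ¬T.IsAncestor x j := by
  obtain ⟨hjJ, hj | ⟨hroot, hanc, hadj⟩⟩ := mem_charges.1 hj
  · exact hj
  obtain ⟨i, hi, hij⟩ := Finset.exists_mem_ne hcard j
  obtain ⟨hiJ, ⟨hiadj, hianc⟩ | ⟨-, hianc, -⟩⟩ := mem_charges.1 hi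
  · exact (hT.not_adj_parent_of_adj_leaf (hJ hiJ) hiadj hianc (hJ hjJ) hij.symm hadj.symm).elim
  · exact (hij (hsep hx hroot hiJ hjJ hianc hanc)).elim

theorem exists_adj_leaf_of_one_lt_card_charges (hx : x ∈ T.verts) (hcard : 1 < #(T.charges J x))
    (i : V) : ∃ s ∈ T.leaves, s ≠ i ∧ G.Adj x s ∧ ¬T.IsAncestor x s := by
  obtain ⟨s, hs, hsi⟩ := Finset.exists_mem_ne hcard i
  exact ⟨s, hJ (mem_charges.1 hs).1, hsi,
    hT.adj_and_not_isAncestor_of_mem_charges hJ hsep hx hcard hs⟩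

theorem charges_parent_eq_empty (hx : x ∈ T.verts) (hcard : 1 < #(T.charges J x)) :
    T.charges J (T.parent x) = ∅ := by
  refine Finset.eq_empty_of_forall_notMem fun i hi ↦ ?_
  obtain ⟨hiJ, hi⟩ := mem_charges.1 hi
  obtain ⟨s, hs, hsi, hadj, hanc⟩ :=
    hT.exists_adj_leaf_of_one_lt_card_charges hJ hsep hx hcard i
  obtain ⟨hi, -⟩ | ⟨-, -, hi⟩ := hi
  · exact hT.not_adj_parent_of_adj_leaf hs hadj hanc (hJ hiJ) hsi.symm hi.symm
  · exact hT.not_adj_parent_parent_of_adj_leaf hs hadj hanc (hJ hiJ) hsi.symm hi.symm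

theorem charges_parent_parent_eq_empty (hx : x ∈ T.verts) (hcard : 1 < #(T.charges J x))
    (hall : T.charges J x = J) : T.charges J (T.parent (T.parent x)) = ∅ := by
  refine Finset.eq_empty_of_forall_notMem fun i hi ↦ ?_
  obtain ⟨hiJ, hi⟩ := mem_charges.1 hi
  obtain ⟨s, hs, hsi, hadj, hanc⟩ :=
    hT.exists_adj_leaf_of_one_lt_card_charges hJ hsep hx hcard i
  obtain ⟨hi, -⟩ | ⟨-, hi, -⟩ := hi
  · exact hT.not_adj_parent_parent_of_adj_leaf hs hadj hanc (hJ hiJ) hsi.symm hi.symm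
  · have hchildren := hT.children_parent_of_adj_leaf hs hadj hanc
    have hparent : T.IsAncestor (T.parent x) i :=
      isAncestor_of_children_parent (T.parent_mem hx)
        (hT.parent_ne_root_of_children_parent hchildren)
        (hT.children_parent_parent_of_adj_leaf hs hadj hanc) (hJ hiJ) hi
    exact (hT.adj_and_not_isAncestor_of_mem_charges hJ hsep hx hcard (hall.symm ▸ hiJ)).2
      (isAncestor_of_children_parent hx (ne_root_of_not_isAncestor (mem_leaves.1 hs).1 hanc)
        hchildren (hJ hiJ) hparent)

theorem children_iterate_parent (hcard : #J = 3) (hx : x ∈ T.verts) {i : ℕ}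
    (hi : i + 1 < #(T.charges J x)) : T.children (T.parent^[i + 1] x) = {T.parent^[i] x} := by
  have := T.card_charges_le J x
  obtain ⟨s, hs, -, hadj, hanc⟩ :=
    hT.exists_adj_leaf_of_one_lt_card_charges hJ hsep hx (by lia) x
  obtain rfl | rfl : i = 0 ∨ i = 1 := by lia
  · exact hT.children_parent_of_adj_leaf hs hadj hanc
  · exact hT.children_parent_parent_of_adj_leaf hs hadj hanc

theorem charges_iterate_parent_eq_empty (hcard : #J = 3) (hx : x ∈ T.verts) {i : ℕ}
    (hi : i + 1 < #(T.charges J x)) : T.charges J (T.parent^[i + 1] x) = ∅ := by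
  have := T.card_charges_le J x
  obtain rfl | rfl : i = 0 ∨ i = 1 := by lia
  · exact hT.charges_parent_eq_empty hJ hsep hx hi
  · exact hT.charges_parent_parent_eq_empty hJ hsep hx (by lia)
      (Finset.eq_of_subset_of_card_le (T.charges_subset J x) (by lia))

theorem iterate_parent_mem (hcard : #J = 3) {E : Finset V}
    (hparent : ∀ x ∈ T.verts, T.parent x ∈ E → x ∈ E)
    (hE : ∀ x ∈ E, ∀ j ∈ J, ¬T.IsAncestor x j ∧ ¬G.Adj j x) (hx : x ∈ T.verts) {i : ℕ}
    (hi : i < #(T.charges J x)) : T.parent^[i] x ∈ T.verts.erase T.root \ E := by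
  induction i with
  | zero =>
    obtain ⟨j, hj⟩ := Finset.card_pos.1 hi
    obtain ⟨hjJ, hj⟩ := mem_charges.1 hj
    have hxE : x ∉ E := fun hxE ↦ by
      obtain ⟨hanc, hadj⟩ := hE x hxE j hjJ
      exact hj.elim (fun h ↦ hadj h.1.symm) (fun h ↦ hanc h.2.1)
    have hroot : x ≠ T.root :=
      hj.elim (fun h ↦ ne_root_of_not_isAncestor (mem_leaves.1 (hJ hjJ)).1 h.2) And.left
    exact Finset.mem_sdiff.2 ⟨Finset.mem_erase.2 ⟨hroot, hx⟩, hxE⟩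
  | succ i ih =>
    obtain ⟨hmem, hnotMem⟩ := Finset.mem_sdiff.1 (ih (by lia))
    have hverts := Finset.mem_of_mem_erase hmem
    have hchildren := hT.children_iterate_parent hJ hsep hcard hx hi
    rw [Function.iterate_succ_apply'] at hchildren ⊢
    exact Finset.mem_sdiff.2 ⟨Finset.mem_erase.2
      ⟨hT.parent_ne_root_of_children_parent hchildren, T.parent_mem hverts⟩,
      fun h ↦ hnotMem (hparent _ hverts h)⟩

end

theorem sum_degree_add_one_le [Fintype V] [DecidableRel G.Adj] (hT : T.IsExtremal k l)
    (hJ : J ⊆ T.leaves) (hcard : #J = 3) (hsep : T.IsSeparated J) :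
    ∑ j ∈ J, G.degree j + l * (k - 2) + 1 ≤ #T.verts := by
  obtain ⟨E, hE, hEcard, hEparent, hEJ⟩ := hT.exists_disjoint_pendant hJ hcard
  have hdegree : ∑ j ∈ J, G.degree j ≤ #(T.verts.erase T.root \ E) := calc
    ∑ j ∈ J, G.degree j
    _ ≤ ∑ j ∈ J, #{x ∈ T.verts | j ∈ T.charges J x} :=
        Finset.sum_le_sum fun j hj ↦ hT.degree_le_card_charged hJ hj
    _ = ∑ x ∈ T.verts, #{j ∈ J | j ∈ T.charges J x} :=
        Finset.sum_card_bipartiteAbove_eq_sum_card_bipartiteBelow fun j x ↦ j ∈ T.charges J x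
    _ = ∑ x ∈ T.verts, #(T.charges J x) := by
        simp only [Finset.filter_mem_eq_inter, Finset.inter_eq_right.2 (T.charges_subset J _)]
    _ ≤ #(T.verts.erase T.root \ E) := by
        refine sum_le_card_of_iterate
          (fun x hx i hi ↦ hT.iterate_parent_mem hJ hsep hcard hEparent hEJ hx hi)
          (fun x hx i hi ↦ Finset.card_eq_zero.2
            (hT.charges_iterate_parent_eq_empty hJ hsep hcard hx hi))
          fun x hx y hy i j hi hj hxy ↦ Finset.singleton_injective ?_
        rw [← hT.children_iterate_parent hJ hsep hcard hx hi, hxy,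
          hT.children_iterate_parent hJ hsep hcard hy hj]
  have hsdiff := Finset.card_sdiff_add_card_eq_card hE
  have herase := Finset.card_erase_add_one T.root_mem
  lia

end IsExtremal

theorem card_erase_root_le_card_children {J : Finset V} (hJ : J ⊆ T.verts)
    (hsep : T.IsSeparated J) : #(J.erase T.root) ≤ #(T.children T.root) := by
  have hbranch : ∀ j ∈ J.erase T.root, ∃ z ∈ T.children T.root, T.IsAncestor z j := by
    intro j hj
    obtain ⟨hroot, hj⟩ := Finset.mem_erase.1 hj
    exact IsAncestor.exists_child (T.reaches_root (hJ hj)) (hJ hj) hroot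
  refine Finset.card_le_card_of_forall_subsingleton (fun j z ↦ T.IsAncestor z j) hbranch ?_
  rintro z hz i ⟨hi, hzi⟩ j ⟨hj, hzj⟩
  obtain ⟨hz, hroot, -⟩ := mem_children.1 hz
  exact hsep hz hroot (Finset.mem_of_mem_erase hi) (Finset.mem_of_mem_erase hj) hzi hzj

/-- Passing to parents in a rooted tree follows shortest paths of `F` to the root. -/
def IsBreadthFirst (T : RootedSubtree G) (F : SimpleGraph V) : Prop :=
  ∀ ⦃x⦄, x ∈ T.verts → x ≠ T.root →
    F.Adj x (T.parent x) ∧ F.dist T.root x = F.dist T.root (T.parent x) + 1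

namespace IsBreadthFirst

variable {F : SimpleGraph V}

theorem dist_add_dist_le (hT : T.IsBreadthFirst F) (hx : x ∈ T.verts) (h : T.IsAncestor z x) :
    F.dist z x + F.dist T.root z ≤ F.dist T.root x := by
  induction h using Relation.ReflTransGen.head_induction_on with
  | refl => rw [dist_self, zero_add]
  | @head x _ hxy _ ih =>
    subst hxy
    obtain rfl | hroot := eq_or_ne x T.root
    · simpa only [T.parent_root] using ih (T.parent_mem hx)
    · obtain ⟨hadj, hdist⟩ := hT hx hroot
      have htriangle := hadj.symm.reachable.dist_triangle_right z
      have := ih (T.parent_mem hx)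
      rw [dist_eq_one_iff_adj.2 hadj.symm] at htriangle
      lia

theorem root_reachable (hT : T.IsBreadthFirst F) (hx : x ∈ T.verts) : F.Reachable T.root x := by
  have hreach := T.reaches_root hx
  induction hreach using Relation.ReflTransGen.head_induction_on with
  | refl => rfl
  | @head x _ hxy _ ih =>
    subst hxy
    obtain rfl | hroot := eq_or_ne x T.root
    · rfl
    · exact (ih (T.parent_mem hx)).trans (hT hx hroot).1.symm.reachable

-- If two members of `J` shared a branch, entering it would lower the total distance to `J`.
theorem isSeparated (hT : T.IsBreadthFirst F) {J : Finset V} (hJ : J ⊆ T.verts) (hcard : #J = 3)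
    (hmin : ∀ z ∈ T.verts, ∑ j ∈ J, F.dist T.root j ≤ ∑ j ∈ J, F.dist z j) :
    T.IsSeparated J := by
  intro z hz hroot i hi j hj hzi hzj
  by_contra hij
  have hjJ : j ∈ J.erase i := Finset.mem_erase.2 ⟨Ne.symm hij, hj⟩
  obtain ⟨m, hm⟩ : ∃ m, (J.erase i).erase j = {m} := by
    rw [← Finset.card_eq_one, Finset.card_erase_of_mem hjJ, Finset.card_erase_of_mem hi, hcard]
  have hsum : ∀ x, ∑ t ∈ J, F.dist x t = F.dist x i + (F.dist x j + F.dist x m) := fun x ↦ by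
    rw [← Finset.add_sum_erase J _ hi, ← Finset.add_sum_erase _ _ hjJ, hm, Finset.sum_singleton]
  have hreach := hT.root_reachable hz
  have hle := hmin z hz
  have hdi := hT.dist_add_dist_le (hJ hi) hzi
  have hdj := hT.dist_add_dist_le (hJ hj) hzj
  have hdm := hreach.symm.dist_triangle_left m
  have hpos := hreach.pos_dist_of_ne hroot.symm
  rw [dist_comm (u := z) (v := T.root)] at hdm
  rw [hsum, hsum] at hle
  lia

theorem subgraph_eq [Finite V] {H : G.Subgraph} (hT : T.IsBreadthFirst H.spanningCoe)
    (hverts : (T.verts : Set V) = H.verts) (hH : H.coe.IsTree) : T.subgraph = H := by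
  have hle : T.subgraph ≤ H := by
    refine ⟨hverts.le, ?_⟩
    rintro x y (h | h) <;> obtain ⟨hmem, hroot, rfl⟩ := mem_children.1 h
    exacts [(hT hmem hroot).1.symm, (hT hmem hroot).1]
  exact eq_of_le_of_isTree_coe hle hverts T.subgraph_connected hH

end IsBreadthFirst

theorem exists_isBreadthFirst [Finite V] {H : G.Subgraph} (hH : H.Connected) {c : V}
    (hc : c ∈ H.verts) : ∃ T : RootedSubtree G,
      T.root = c ∧ (T.verts : Set V) = H.verts ∧ T.IsBreadthFirst H.spanningCoe := by
  have := Fintype.ofFinite V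
  have hreach : ∀ {x}, x ∈ H.verts → H.spanningCoe.Reachable x c := fun hx ↦
    (hH.coe ⟨_, hx⟩ ⟨c, hc⟩).map H.coeEmbeddingSpanningCoe.toHom
  choose! f hf using fun x (hx : x ∈ H.verts ∧ x ≠ c) ↦
    exists_adj_dist_eq_add_one (hreach hx.1) hx.2
  set parent := Function.update f c c with hparent
  have hparent_root : parent c = c := Function.update_self ..
  have hparent_of_ne : ∀ {x}, x ∈ H.verts → x ≠ c →
      H.Adj x (parent x) ∧ H.spanningCoe.dist c x = H.spanningCoe.dist c (parent x) + 1 := by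
    intro x hx hxc
    rw [hparent, Function.update_of_ne hxc]
    exact hf x ⟨hx, hxc⟩
  have hmem : ∀ {x}, x ∈ H.verts → parent x ∈ H.verts := by
    intro x hx
    obtain rfl | hxc := eq_or_ne x c
    · exact hparent_root.symm ▸ hc
    · exact H.edge_vert (hparent_of_ne hx hxc).1.symm
  have hreaches : ∀ {n x}, x ∈ H.verts → H.spanningCoe.dist c x = n →
      Relation.ReflTransGen (fun a b ↦ parent a = b) x c := by
    intro n
    induction n with
    | zero =>
      intro x hx hdist
      rw [(hreach hx).symm.dist_eq_zero_iff.1 hdist]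
    | succ n ih =>
      intro x hx hdist
      have hxc : x ≠ c := by
        rintro rfl
        rw [dist_self] at hdist
        lia
      exact .head rfl (ih (hmem hx) (by have := (hparent_of_ne hx hxc).2; lia))
  exact ⟨⟨H.verts.toFinset, c, parent, Set.mem_toFinset.2 hc, hparent_root,
    fun hx ↦ Set.mem_toFinset.2 (hmem (Set.mem_toFinset.1 hx)),
    fun hx hxc ↦ (hparent_of_ne (Set.mem_toFinset.1 hx) hxc).1.adj_sub,
    fun hx ↦ hreaches (Set.mem_toFinset.1 hx) rfl⟩, rfl, Set.coe_toFinset _,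
    fun x hx hxc ↦ hparent_of_ne (Set.mem_toFinset.1 hx) hxc⟩

theorem exists_subgraph_eq_isSeparated [Finite V] {H : G.Subgraph} (hH : H.coe.IsTree)
    {J : Finset V} (hJ : (J : Set V) ⊆ H.verts) (hcard : #J = 3) :
    ∃ T : RootedSubtree G, T.subgraph = H ∧ T.IsSeparated J := by
  have hconn : H.Connected := ⟨hH.connected⟩
  obtain ⟨c, hc, hmin⟩ := (Set.toFinite H.verts).exists_minimalFor
    (fun x ↦ ∑ j ∈ J, H.spanningCoe.dist x j) _ hconn.nonempty
  obtain ⟨T, rfl, hverts, hT⟩ := exists_isBreadthFirst hconn hc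
  refine ⟨T, hT.subgraph_eq hverts hH, hT.isSeparated ?_ hcard fun z hz ↦ ?_⟩
  · rwa [← Finset.coe_subset, hverts]
  · have hz : z ∈ H.verts := hverts ▸ hz
    exact (le_total _ _).elim id fun h ↦ hmin hz h

theorem exists_isExtremal [Finite V] {k l : ℕ} (hk : 2 ≤ k) (hl : 2 ≤ l)
    (hgap : maxKEndedOrder G k + l ≤ maxKEndedOrder G (k + 1)) :
    ∃ T : RootedSubtree G, T.IsExtremal k l ∧ ∃ J ⊆ T.leaves, #J = 3 ∧ T.IsSeparated J := by
  obtain ⟨H, hH, hcard⟩ :=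
    exists_isKEndedTree_ncard_verts_eq (G := G) (k := k + 1) (by lia)
  have hnot : ¬IsKEndedTree G k H := fun h ↦ by
    have := h.ncard_verts_le
    lia
  obtain ⟨htree, hends⟩ | ⟨-, hcycle⟩ := hH
  swap
  · exact (hnot (Or.inr ⟨by lia, hcycle⟩)).elim
  have hends : endVertexCount H = k + 1 :=
    le_antisymm hends (Nat.lt_of_not_le fun h ↦ hnot (Or.inl ⟨htree, h⟩))
  obtain ⟨J, hJ, hJcard⟩ : ∃ J : Finset V,
      (J : Set V) ⊆ {x | x ∈ H.verts ∧ (H.neighborSet x).ncard = 1} ∧ #J = 3 := by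
    have hthree : 3 ≤ {x | x ∈ H.verts ∧ (H.neighborSet x).ncard = 1}.ncard :=
      (by lia : 3 ≤ k + 1).trans_eq hends.symm
    rw [Set.ncard_eq_toFinset_card _ (Set.toFinite _)] at hthree
    obtain ⟨J, hJ, hJcard⟩ := Finset.exists_subset_card_eq hthree
    exact ⟨J, fun x hx ↦ (Set.Finite.mem_toFinset _).1 (hJ hx), hJcard⟩
  obtain ⟨T, rfl, hsep⟩ :=
    exists_subgraph_eq_isSeparated htree (hJ.trans fun _ hx ↦ hx.1) hJcard
  have hchildren := card_erase_root_le_card_children (fun x hx ↦ (hJ hx).1) hsep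
  have htwo : 2 ≤ #(T.children T.root) := by
    have := Finset.pred_card_le_card_erase (s := J) (a := T.root)
    lia
  rw [setOf_endVertex_subgraph htwo, Finset.coe_subset] at hJ
  rw [Finset.erase_eq_of_notMem fun h ↦ root_notMem_leaves htwo (hJ h)] at hchildren
  have hverts : #T.verts = maxKEndedOrder G (k + 1) := hcard ▸ (Set.ncard_coe_finset _).symm
  exact ⟨T, ⟨by lia, endVertexCount_subgraph htwo ▸ hends, hverts, hverts ▸ hgap, hl⟩,
    J, hJ, hJcard, hsep⟩

end RootedSubtree

theorem minDegreeSum_le [Fintype V] {G : SimpleGraph V} [DecidableRel G.Adj] {m : ℕ} {s : Finset V}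
    (hcard : s.card = m) (hs : IsIndSet G s) :
    minDegreeSum G m ≤ (∑ v ∈ s, G.degree v : ℕ∞) :=
  iInf₂_le s ⟨hcard, hs⟩

theorem corollary16_general [Fintype V] (G : SimpleGraph V) [DecidableRel G.Adj] (k l : ℕ)
    (hk : 2 ≤ k) (hl : 2 ≤ l)
    (h : (maxKEndedOrder G (k + 1) : ℕ∞) ≤
      minDegreeSum G 3 + ((l * (k - 2) : ℕ) : ℕ∞)) :
    maxKEndedOrder G k + l ≥ maxKEndedOrder G (k + 1) + 1 := by
  by_contra hgap
  obtain ⟨T, hT, J, hJ, hcard, hsep⟩ :=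
    RootedSubtree.exists_isExtremal (G := G) hk hl (by lia)
  have hind : IsIndSet G J := fun u hu v hv ↦ hT.not_adj_of_mem_leaves (hJ hu) (hJ hv)
  have hle : maxKEndedOrder G (k + 1) ≤ ∑ v ∈ J, G.degree v + l * (k - 2) := by
    have := h.trans (add_le_add_left (minDegreeSum_le hcard hind) _)
    exact_mod_cast this
  have hsum := hT.sum_degree_add_one_le hJ hcard hsep
  rw [hT.card_verts] at hsum
  lia

/-- **Corollary 16.** If `G` is connected and `σ_3 ≥ t_{k+1} - λ(k - 2)` for some
integers `k ≥ 2` and `λ ≥ 2`, then `t_k ≥ t_{k+1} - λ + 1`. -/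
theorem corollary16 [Fintype V] (G : SimpleGraph V) [DecidableRel G.Adj]
    (hG : G.Connected) (k l : ℕ) (hk : 2 ≤ k) (hl : 2 ≤ l)
    (h : (maxKEndedOrder G (k + 1) : ℕ∞) ≤
      minDegreeSum G 3 + ((l * (k - 2) : ℕ) : ℕ∞)) :
    maxKEndedOrder G k + l ≥ maxKEndedOrder G (k + 1) + 1 :=
  corollary16_general G k l hk hl h
end
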